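/- arXiv:1606.00563 — 2 statements merged into one kernel-verified Lean document; each statement's English description precedes it below -/
import Mathlib

section
/- Suppose i,j ∈ [n] and w ∈ (E∪T)^+ are such that i and j' belong to the same block A ∪ B' of w̄ (where A ⊆ [n], B ⊆ [n]). Then o_i w ~ w o_j, and o_i w ~ o_i u o_j for some u ∈ (E∪T)^+ whose image ū is the partition obtained from w̄ by replacing the block A ∪ B' by the two blocks A and B'. -/
/-!
Write `o_A`, `e_A` for the products of the letters `o_a`, `e_a` with `a ∈ A`. All equivalences
of words are proved as equalities in the quotient monoid `QM n`, and all images of words over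
`E ∪ T` are computed by multiplying by one letter on the left: `ē_k` isolates the upper point `k`
(`ebar_mul_rel`), and `t̄_pq` merges the blocks of the upper points `p`, `q` (`tbar_mul_rel`).

* `ins_eq_of_wRel`: inserting one letter `o` at a point of the boundary of `w` (`o_a w` for an
  upper point, `w o_b` for a lower point) gives equivalent words for all points of a block of
  `w̄`. Indeed an inserted `o` travels along every edge of the diagram of a letter, by the
  commutation relations and `t_pq o_p ~ t_pq o_q`. This gives `o_i w ~ w o_j`, and, `o` being
  idempotent, `o_i w ~ o_A w o_B`.

* `exists_cut`: let `A ∪ B'` be a union of blocks of `w̄`. Then `o_A w o_B ~ o_A U o_B`, where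
  `U` is a word over `E ∪ T` whose image has the singletons of `A`, the block `B'`, and the
  blocks of `w̄` outside `A ∪ B'`. The word `U` is built from right to left. At the bottom,
  `o_B ~ o_B e_B o_B` and `o_B ~ t_B o_B` provide a cut and restore the block `B'`, where `t_B` is
  a product of letters `t_jb`. To pass a letter, `o` is spread to the set `C` of all points below
  it that are connected to `A ∪ B'`, the induction hypothesis cuts the rest of the word with
  `e_C` in front, and the letters `o` between `e_A` and `e_C` are then removed. For `e_k` this
  rests on `o_k e_k o_k ~ o_k` and `e_k o_k e_k ~ e_k` (`cut_e`); a letter `t_pq` with `p, q ∈ A`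
  disappears by `o_A t_pq ~ o_A` and `e_A t_pq e_A ~ e_A`.

Finally `u = t_A U`, where `o_A t_A ~ o_A`: the factor `t_A` restores the block `A`. Since `A` and
`B'` are blocks of `ū`, the first lemma applied to `u` gives `o_A u o_B ~ o_i u o_j`.
-/

namespace RookPaper

/-- Reflexive–symmetric–transitive closure of a relation
(connectivity by paths in a graph). -/
inductive RClosure {V : Type*} (E : V → V → Prop) : V → V → Prop
  | base {x y : V} : E x y → RClosure E x y
  | refl (x : V) : RClosure E x x
  | symm {x y : V} : RClosure E x y → RClosure E y x
  | trans {x y z : V} : RClosure E x y → RClosure E y z → RClosure E x z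

/-- The 2n points `1,…,n` (`Sum.inl`) and `1',…,n'` (`Sum.inr`). -/
abbrev Pt (n : ℕ) := Fin n ⊕ Fin n

/-- A rook partition of degree `n`, encoded as a partial equivalence relation on the
`2n` points: its blocks are the equivalence classes of `rel`, and the rook dots are the
points `x` with `¬ rel x x`. -/
structure RP (n : ℕ) where
  rel : Pt n → Pt n → Prop
  symm : ∀ {x y : Pt n}, rel x y → rel y x
  trans : ∀ {x y z : Pt n}, rel x y → rel y z → rel x z

/-- The underlying index in `[n]` of a point (`i` and `i'` both have index `i`). -/
def idx {n : ℕ} : Pt n → Fin n := Sum.elim id id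

/-- For `A ⊆ [n]`, the corresponding set of upper points. -/
def upSet {n : ℕ} (A : Set (Fin n)) : Set (Pt n) := Sum.inl '' A

/-- For `B ⊆ [n]`, the set `B' = {b' : b ∈ B}` of lower points. -/
def dnSet {n : ℕ} (B : Set (Fin n)) : Set (Pt n) := Sum.inr '' B

/-- `x` is a rook dot of `α`. -/
def RP.IsRookDot {n : ℕ} (α : RP n) (x : Pt n) : Prop := ¬ α.rel x x

/-- `α` has no rook dots, i.e. `α` lies in the partition monoid `P_n`. -/
def RP.NoDots {n : ℕ} (α : RP n) : Prop := ∀ x, α.rel x x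

/-- `B` is a block of `α`. -/
def RP.IsBlock {n : ℕ} (α : RP n) (B : Set (Pt n)) : Prop :=
  ∃ x, α.rel x x ∧ B = {y | α.rel x y}

/-- The identity rook partition, with blocks `{i,i'}`. -/
instance {n : ℕ} : One (RP n) :=
  ⟨{ rel := fun x y => idx x = idx y
     symm := fun h => Eq.symm h
     trans := fun h h' => Eq.trans h h' }⟩

/-! The product graph `Γ(α,β)` lives on three rows of `n` vertices. -/

abbrev V3 (n : ℕ) := Fin n ⊕ Pt n

def vTop {n : ℕ} (i : Fin n) : V3 n := Sum.inl i
def vMid {n : ℕ} (i : Fin n) : V3 n := Sum.inr (Sum.inl i)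
def vBot {n : ℕ} (i : Fin n) : V3 n := Sum.inr (Sum.inr i)

/-- `α` occupies the top and middle rows. -/
def embA {n : ℕ} : Pt n → V3 n := Sum.elim vTop vMid
/-- `β` occupies the middle and bottom rows. -/
def embB {n : ℕ} : Pt n → V3 n := Sum.elim vMid vBot
/-- The product `αβ` lives on the top and bottom rows. -/
def embOut {n : ℕ} : Pt n → V3 n := Sum.elim vTop vBot

/-- The edges of the product graph `Γ(α,β)`. -/
def pgEdge {n : ℕ} (α β : RP n) (x y : V3 n) : Prop :=
  (∃ a b : Pt n, α.rel a b ∧ x = embA a ∧ y = embA b) ∨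
  (∃ a b : Pt n, β.rel a b ∧ x = embB a ∧ y = embB b)

/-- Connectivity (by a possibly empty path) in the product graph `Γ(α,β)`. -/
def pgConn {n : ℕ} (α β : RP n) : V3 n → V3 n → Prop :=
  RClosure (pgEdge α β)

/-- The white vertices of `Γ(α,β)`: a top vertex is white if it is a rook dot of `α`,
a bottom vertex is white if it is a rook dot of `β`, and a middle vertex is white if it is
a rook dot of `α` (as a lower point) or of `β` (as an upper point). -/
def pgWhite {n : ℕ} (α β : RP n) (v : V3 n) : Prop :=
  (∃ i, v = vTop i ∧ ¬ α.rel (Sum.inl i) (Sum.inl i)) ∨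
  (∃ i, v = vMid i ∧ (¬ α.rel (Sum.inr i) (Sum.inr i) ∨ ¬ β.rel (Sum.inl i) (Sum.inl i))) ∨
  (∃ i, v = vBot i ∧ ¬ β.rel (Sum.inr i) (Sum.inr i))

/-- The product of two rook partitions: a point of `αβ` is a rook dot iff it is connected
to a white vertex of `Γ(α,β)`, and two points are in the same block of `αβ` iff they are
connected in `Γ(α,β)` (and are not rook dots). -/
instance {n : ℕ} : Mul (RP n) :=
  ⟨fun α β =>
    { rel := fun x y =>
        pgConn α β (embOut x) (embOut y) ∧
          ∀ w, pgWhite α β w → ¬ pgConn α β (embOut x) w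
      symm := by
        intro x y h
        exact ⟨RClosure.symm h.1, fun w hw hc => h.2 w hw (RClosure.trans h.1 hc)⟩
      trans := by
        intro x y z h h'
        exact ⟨RClosure.trans h.1 h'.1, h.2⟩ }⟩

/-- The rook partition corresponding to a permutation `σ`: blocks `{i, (σ i)'}`. -/
def permRP {n : ℕ} (σ : Equiv.Perm (Fin n)) : RP n where
  rel x y := Sum.elim (fun i => σ i) (fun i => i) x = Sum.elim (fun i => σ i) (fun i => i) y
  symm := fun h => Eq.symm h
  trans := fun h h' => Eq.trans h h'

/-- `α` lies in the copy of the symmetric group `S_n` inside `RP_n`. -/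
def RP.IsPermDiag {n : ℕ} (α : RP n) : Prop := ∃ σ : Equiv.Perm (Fin n), α = permRP σ

/-- The generator `ē_i` : blocks `{j,j'}` for `j ≠ i`, and singleton blocks `{i}`, `{i'}`. -/
def ebar {n : ℕ} (i : Fin n) : RP n where
  rel x y := x = y ∨ (idx x = idx y ∧ idx x ≠ i)
  symm := by
    rintro x y (rfl | ⟨h1, h2⟩)
    · exact Or.inl rfl
    · exact Or.inr ⟨h1.symm, h1 ▸ h2⟩
  trans := by
    rintro x y z (rfl | ⟨h1, h2⟩) h
    · exact h
    · rcases h with rfl | ⟨h3, h4⟩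
      · exact Or.inr ⟨h1, h2⟩
      · exact Or.inr ⟨h1.trans h3, h2⟩

/-- The generator `t̄_ij` (for `i ≠ j`): blocks `{k,k'}` for `k ∉ {i,j}`, and `{i,j,i',j'}`. -/
def tbar {n : ℕ} (i j : Fin n) : RP n where
  rel x y := idx x = idx y ∨ ((idx x = i ∨ idx x = j) ∧ (idx y = i ∨ idx y = j))
  symm := by
    rintro x y (h | ⟨h1, h2⟩)
    · exact Or.inl h.symm
    · exact Or.inr ⟨h2, h1⟩
  trans := by
    rintro x y z hxy hyz
    rcases hxy with h | ⟨h1, h2⟩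
    · rcases hyz with h' | ⟨h3, h4⟩
      · exact Or.inl (h.trans h')
      · refine Or.inr ⟨?_, h4⟩
        rw [h]; exact h3
    · rcases hyz with h' | ⟨h3, h4⟩
      · refine Or.inr ⟨h1, ?_⟩
        rw [← h']; exact h2
      · exact Or.inr ⟨h1, h4⟩

/-- `ō_A` for a subset `A ⊆ [n]`: rook dots at all points of `A ∪ A'`, blocks `{j,j'}` for
`j ∉ A`. -/
def obarS {n : ℕ} (A : Set (Fin n)) : RP n where
  rel x y := idx x = idx y ∧ idx x ∉ A
  symm := by
    rintro x y ⟨h1, h2⟩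
    exact ⟨h1.symm, h1 ▸ h2⟩
  trans := by
    rintro x y z ⟨h1, h2⟩ ⟨h3, h4⟩
    exact ⟨h1.trans h3, h2⟩

/-- The generator `ō_i`: rook dots `i` and `i'`, blocks `{j,j'}` for `j ≠ i`. -/
def obar {n : ℕ} (i : Fin n) : RP n := obarS {i}

/-- For an index `i` of a simple transposition (`1 ≤ i ≤ n-1`, zero-based `Fin (n-1)`),
the smaller of the two swapped points. -/
def lo {n : ℕ} (i : Fin (n - 1)) : Fin n := ⟨i.val, by have := i.isLt; omega⟩
/-- The larger of the two swapped points. -/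
def hi {n : ℕ} (i : Fin (n - 1)) : Fin n := ⟨i.val + 1, by have := i.isLt; omega⟩

/-- The generator `s̄_i`: the simple transposition with blocks `{i,(i+1)'}`, `{i+1,i'}`,
and `{j,j'}` for other `j`. -/
def sbar {n : ℕ} (i : Fin (n - 1)) : RP n := permRP (Equiv.swap (lo i) (hi i))

/-- The generator `q̄_i = t̄_{i,i+1}`. -/
def qbar {n : ℕ} (i : Fin (n - 1)) : RP n := tbar (lo i) (hi i)

/-- Membership in the subsemigroup generated by a subset `X`. -/
inductive SgGen {M : Type*} [Mul M] (X : Set M) : M → Prop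
  | incl {x : M} : x ∈ X → SgGen X x
  | mul {a b : M} : SgGen X a → SgGen X b → SgGen X (a * b)

/-- Membership in the submonoid generated by a subset `X`. -/
inductive MonGen {M : Type*} [Mul M] [One M] (X : Set M) : M → Prop
  | one : MonGen X 1
  | incl {x : M} : x ∈ X → MonGen X x
  | mul {a b : M} : MonGen X a → MonGen X b → MonGen X (a * b)

/-- Evaluation of a word under a map on the letters (the product, in order, of the images
of the letters; the empty word evaluates to `1`). -/
def evalWord {X M : Type*} [Mul M] [One M] (f : X → M) : List X → M
  | [] => 1
  | [x] => f x
  | x :: y :: w => f x * evalWord f (y :: w)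

/-- The congruence on the free monoid of words (with product = concatenation) generated
by a set of pairs `R`.  Restricted to nonempty words it is the congruence on the free
semigroup generated by `R`. -/
inductive CongGen {X : Type*} (R : List X → List X → Prop) : List X → List X → Prop
  | rel {u v : List X} : R u v → CongGen R u v
  | refl (u : List X) : CongGen R u u
  | symm {u v : List X} : CongGen R u v → CongGen R v u
  | trans {u v w : List X} : CongGen R u v → CongGen R v w → CongGen R u w
  | mul {u v u' v' : List X} : CongGen R u v → CongGen R u' v' → CongGen R (u ++ u') (v ++ v')


/-! ## The alphabet E ∪ T ∪ O and the relations (R1)–(R17) -/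

/-- The alphabet `E ∪ T ∪ O`: letters `e_i` (`i ∈ [n]`), `t_ij` (`1 ≤ i < j ≤ n`,
with the convention `t_ij = t_ji`), and `o_i` (`i ∈ [n]`). -/
inductive ETO (n : ℕ) : Type
  | e : Fin n → ETO n
  | t : (i j : Fin n) → i < j → ETO n
  | o : Fin n → ETO n

/-- The letter `t_ij = t_ji`, for distinct `i, j`. -/
def tg {n : ℕ} (i j : Fin n) (h : i ≠ j) : ETO n :=
  if hlt : i < j then ETO.t i j hlt else ETO.t j i (h.symm.lt_of_le (not_lt.mp hlt))

/-- The letter `t_ij` when `i ≠ j`, and the empty word when `i = j`. -/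
def tgd {n : ℕ} (i j : Fin n) : List (ETO n) :=
  if h : i = j then [] else [tg i j h]

/-- `x` is a letter of `E ∪ T`. -/
def ETO.isET {n : ℕ} : ETO n → Prop
  | .o _ => False
  | _ => True

/-- `x` is a letter of `O`. -/
def ETO.isO {n : ℕ} : ETO n → Prop
  | .o _ => True
  | _ => False

/-- The relations (R1)–(R17). -/
inductive RelETO (n : ℕ) : List (ETO n) → List (ETO n) → Prop
  | r1 (i : Fin n) : RelETO n [.e i, .e i] [.e i]
  | r2 (i j : Fin n) (h : i ≠ j) : RelETO n [.e i, .e j] [.e j, .e i]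
  | r3 (i j : Fin n) (h : i ≠ j) : RelETO n [tg i j h, tg i j h] [tg i j h]
  | r4 (i j k l : Fin n) (hij : i ≠ j) (hkl : k ≠ l) :
      RelETO n [tg i j hij, tg k l hkl] [tg k l hkl, tg i j hij]
  | r5 (i j k : Fin n) (hij : i ≠ j) (hjk : j ≠ k) (hik : i ≠ k) :
      RelETO n [tg i j hij, tg j k hjk] [tg j k hjk, tg k i hik.symm]
  | r6 (i j k : Fin n) (hij : i ≠ j) (hki : k ≠ i) (hkj : k ≠ j) :
      RelETO n [tg i j hij, .e k] [.e k, tg i j hij]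
  | r7 (i j k : Fin n) (hij : i ≠ j) (hk : k = i ∨ k = j) :
      RelETO n [tg i j hij, .e k, tg i j hij] [tg i j hij]
  | r8 (i j k : Fin n) (hij : i ≠ j) (hk : k = i ∨ k = j) :
      RelETO n [.e k, tg i j hij, .e k] [.e k]
  | r9 (i j k : Fin n) (hij : i ≠ j) (hjk : j ≠ k) (hik : i ≠ k) :
      RelETO n [.e k, tg k i hik.symm, .e i, tg i j hij, .e j, tg j k hjk, .e k]
               [.e k, tg k j hjk.symm, .e j, tg j i hij.symm, .e i, tg i k hik, .e k]
  | r10 (i j k l : Fin n) (hij : i ≠ j) (hik : i ≠ k) (hil : i ≠ l)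
        (hjk : j ≠ k) (hjl : j ≠ l) (hkl : k ≠ l) :
      RelETO n [.e k, tg k i hik.symm, .e i, tg i j hij, .e j, tg j l hjl, .e l,
                  tg l k hkl.symm, .e k]
               [.e k, tg k l hkl, .e l, tg l i hil.symm, .e i, tg i j hij, .e j,
                  tg j k hjk, .e k]
  | r11 (i : Fin n) : RelETO n [.o i, .o i] [.o i]
  | r12 (i j : Fin n) (h : i ≠ j) : RelETO n [.o i, .o j] [.o j, .o i]
  | r13 (i j : Fin n) (h : i ≠ j) : RelETO n [.o i, .e j] [.e j, .o i]
  | r14 (i : Fin n) : RelETO n [.o i, .e i, .o i] [.o i]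
  | r15 (i : Fin n) : RelETO n [.e i, .o i, .e i] [.e i]
  | r16 (i j k : Fin n) (hij : i ≠ j) : RelETO n [tg i j hij, .o k] [.o k, tg i j hij]
  | r17a (i j : Fin n) (h : i ≠ j) : RelETO n [tg i j h, .o i] [.o i, .o j]
  | r17b (i j : Fin n) (h : i ≠ j) : RelETO n [tg i j h, .o j] [.o i, .o j]

/-- The map `Φ` on letters. -/
def phiLetter {n : ℕ} : ETO n → RP n
  | .e i => ebar i
  | .t i j _ => tbar i j
  | .o i => obar i

/-- The homomorphism `Φ : (E ∪ T ∪ O)⁺ → RP_n`. -/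
def PhiETO {n : ℕ} : List (ETO n) → RP n := evalWord phiLetter

/-- For `A = {i₁ < ⋯ < i_k} ⊆ [n]`, the word `o_A = o_{i₁} ⋯ o_{i_k}`. -/
def oWord {n : ℕ} (A : Finset (Fin n)) : List (ETO n) :=
  (A.sort (· ≤ ·)).map ETO.o

/-- The chain of `t`-letters along consecutive members of a list. -/
def tChain {n : ℕ} : List (Fin n) → List (ETO n)
  | a :: b :: rest => tgd a b ++ tChain (b :: rest)
  | _ => []

/-- For `A = {i₁ < ⋯ < i_k} ⊆ [n]`, the word `t_A = t_{i₁i₂} t_{i₂i₃} ⋯ t_{i_{k-1}i_k}`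
(the empty word if `|A| ≤ 1`). -/
def tWord {n : ℕ} (A : Finset (Fin n)) : List (ETO n) :=
  tChain (A.sort (· ≤ ·))

/-- The word `e_ij = e_i t_ij e_j` for distinct `i, j`. -/
def eWord {n : ℕ} (i j : Fin n) (h : i ≠ j) : List (ETO n) :=
  [ETO.e i, tg i j h, ETO.e j]

/-- `α` lies in (the copy inside `RP_n` of) the symmetric inverse monoid `I_n`:
no rook dots, and every block has at most one upper and at most one lower point. -/
def RP.MemIn {n : ℕ} (α : RP n) : Prop :=
  α.NoDots ∧ (∀ i j : Fin n, α.rel (Sum.inl i) (Sum.inl j) → i = j) ∧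
    (∀ i j : Fin n, α.rel (Sum.inr i) (Sum.inr j) → i = j)


/-! ### Left multiplication by a letter -/

/-- The projection of the vertices of `Γ(α,β)` onto the points of `β` which identifies the top
row with the middle row. Relations on points of `β` are pulled back along it. -/
def collapse {n : ℕ} : V3 n → Pt n := Sum.elim Sum.inl id

theorem mul_rel_of_noDots {n : ℕ} {α β : RP n} (hα : α.NoDots) (hβ : β.NoDots) (x y : Pt n) :
    (α * β).rel x y ↔ pgConn α β (embOut x) (embOut y) := by
  constructor
  · exact fun h => h.1
  · intro h
    refine ⟨h, ?_⟩
    rintro w (⟨i, -, h⟩ | ⟨i, -, h | h⟩ | ⟨i, -, h⟩) _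
    exacts [h (hα _), h (hα _), h (hβ _), h (hβ _)]

theorem ebar_noDots {n : ℕ} (k : Fin n) : (ebar k).NoDots := fun _ => Or.inl rfl

theorem tbar_noDots {n : ℕ} (p q : Fin n) : (tbar p q).NoDots := fun _ => Or.inl rfl

theorem collapse_embA {n : ℕ} (a : Pt n) : collapse (embA a) = Sum.inl (idx a) := by
  rcases a with a | a <;> rfl

theorem collapse_embB {n : ℕ} (a : Pt n) : collapse (embB a) = a := by
  rcases a with a | a <;> rfl

theorem collapse_embOut {n : ℕ} (a : Pt n) : collapse (embOut a) = a := by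
  rcases a with a | a <;> rfl

theorem embOut_injective {n : ℕ} {a b : Pt n} (h : embOut a = embOut b) : a = b := by
  rw [← collapse_embOut a, h, collapse_embOut]

theorem embB_ne_top {n : ℕ} (a : Pt n) (k : Fin n) : embB a ≠ vTop k := by
  rcases a with a | a <;> simp [embB, vMid, vBot, vTop]

/-- Left multiplication by `ē_k` isolates the upper point `k` and changes nothing else. -/
theorem ebar_mul_rel {n : ℕ} (k : Fin n) {β : RP n} (hβ : β.NoDots) (x y : Pt n) :
    (ebar k * β).rel x y ↔ x = y ∨ (β.rel x y ∧ x ≠ Sum.inl k ∧ y ≠ Sum.inl k) := by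
  rw [mul_rel_of_noDots (ebar_noDots k) hβ]
  constructor
  · intro h
    have key : ∀ v v' : V3 n, pgConn (ebar k) β v v' → v = v' ∨
        (β.rel (collapse v) (collapse v') ∧ v ≠ vTop k ∧ v' ≠ vTop k) := by
      intro v v' h
      induction h with
      | base h =>
        rcases h with ⟨a, b, hab, rfl, rfl⟩ | ⟨a, b, hab, rfl, rfl⟩
        · rcases hab with rfl | ⟨h1, h2⟩
          · exact Or.inl rfl
          · right
            rw [collapse_embA, collapse_embA, h1]
            refine ⟨hβ _, ?_, ?_⟩
            · rcases a with a | a <;> simp_all [embA, vMid, vTop, idx]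
            · rw [h1] at h2
              rcases b with b | b <;> simp_all [embA, vMid, vTop, idx]
        · right
          rw [collapse_embB, collapse_embB]
          exact ⟨hab, embB_ne_top _ _, embB_ne_top _ _⟩
      | refl => exact Or.inl rfl
      | symm _ ih =>
        rcases ih with rfl | ⟨h1, h2, h3⟩
        · exact Or.inl rfl
        · exact Or.inr ⟨β.symm h1, h3, h2⟩
      | trans _ _ ih1 ih2 =>
        rcases ih1 with rfl | ⟨h1, h2, h3⟩
        · exact ih2
        · rcases ih2 with rfl | ⟨h4, h5, h6⟩
          · exact Or.inr ⟨h1, h2, h3⟩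
          · exact Or.inr ⟨β.trans h1 h4, h2, h6⟩
    rcases key _ _ h with h | ⟨h1, h2, h3⟩
    · exact Or.inl (embOut_injective h)
    · rw [collapse_embOut, collapse_embOut] at h1
      refine Or.inr ⟨h1, ?_, ?_⟩
      · rintro rfl; exact h2 rfl
      · rintro rfl; exact h3 rfl
  · rintro (rfl | ⟨h1, h2, h3⟩)
    · exact RClosure.refl _
    · have key : ∀ z : Pt n, z ≠ Sum.inl k → pgConn (ebar k) β (embOut z) (embB z) := by
        rintro (a | a) hz
        · refine RClosure.base (Or.inl ⟨Sum.inl a, Sum.inr a, Or.inr ⟨rfl, ?_⟩, rfl, rfl⟩)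
          rintro rfl; exact hz rfl
        · exact RClosure.refl _
      have edge : pgConn (ebar k) β (embB x) (embB y) :=
        RClosure.base (Or.inr ⟨x, y, h1, rfl, rfl⟩)
      exact (key x h2).trans (edge.trans (key y h3).symm)

/-- Left multiplication by `t̄_pq` merges the blocks of the upper points `p` and `q`. -/
theorem tbar_mul_rel {n : ℕ} (p q : Fin n) {β : RP n} (hβ : β.NoDots) (x y : Pt n) :
    (tbar p q * β).rel x y ↔ β.rel x y ∨
      ((β.rel x (Sum.inl p) ∨ β.rel x (Sum.inl q)) ∧
        (β.rel y (Sum.inl p) ∨ β.rel y (Sum.inl q))) := by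
  rw [mul_rel_of_noDots (tbar_noDots p q) hβ]
  have top : ∀ z : Pt n, pgConn (tbar p q) β (embOut z) (embB z) := by
    rintro (a | a)
    · exact RClosure.base (Or.inl ⟨Sum.inl a, Sum.inr a, Or.inl rfl, rfl, rfl⟩)
    · exact RClosure.refl _
  constructor
  · intro h
    have key : ∀ v v' : V3 n, pgConn (tbar p q) β v v' → β.rel (collapse v) (collapse v') ∨
        ((β.rel (collapse v) (Sum.inl p) ∨ β.rel (collapse v) (Sum.inl q)) ∧
        (β.rel (collapse v') (Sum.inl p) ∨ β.rel (collapse v') (Sum.inl q))) := by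
      intro v v' h
      induction h with
      | base h =>
        rcases h with ⟨a, b, hab, rfl, rfl⟩ | ⟨a, b, hab, rfl, rfl⟩
        · rw [collapse_embA, collapse_embA]
          rcases hab with h | ⟨h1, h2⟩
          · left; rw [h]; exact hβ _
          · right
            constructor
            · rcases h1 with h1 | h1 <;> rw [h1]
              exacts [Or.inl (hβ _), Or.inr (hβ _)]
            · rcases h2 with h2 | h2 <;> rw [h2]
              exacts [Or.inl (hβ _), Or.inr (hβ _)]
        · rw [collapse_embB, collapse_embB]
          exact Or.inl hab
      | refl => exact Or.inl (hβ _)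
      | symm _ ih =>
        rcases ih with h | ⟨h1, h2⟩
        · exact Or.inl (β.symm h)
        · exact Or.inr ⟨h2, h1⟩
      | trans _ _ ih1 ih2 =>
        rcases ih1 with h | ⟨h1, h2⟩
        · rcases ih2 with h' | ⟨h3, h4⟩
          · exact Or.inl (β.trans h h')
          · exact Or.inr ⟨h3.imp (β.trans h) (β.trans h), h4⟩
        · rcases ih2 with h' | ⟨h3, h4⟩
          · exact Or.inr ⟨h1, h2.imp (β.trans (β.symm h')) (β.trans (β.symm h'))⟩
          · exact Or.inr ⟨h1, h4⟩
    simpa only [collapse_embOut] using key _ _ h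
  · have edge : ∀ {a b : Pt n}, β.rel a b → pgConn (tbar p q) β (embB a) (embB b) :=
      fun h => RClosure.base (Or.inr ⟨_, _, h, rfl, rfl⟩)
    have pq : ∀ z : Pt n, (β.rel z (Sum.inl p) ∨ β.rel z (Sum.inl q)) →
        pgConn (tbar p q) β (embOut z) (vMid p) := by
      rintro z (h | h)
      · exact (top z).trans (edge h)
      · refine ((top z).trans (edge h)).trans (RClosure.base (Or.inl ⟨Sum.inr q, Sum.inr p,
          Or.inr ⟨Or.inr rfl, Or.inl rfl⟩, rfl, rfl⟩))
    rintro (h | ⟨h1, h2⟩)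
    · exact (top x).trans ((edge h).trans (top y).symm)
    · exact (pq x h1).trans (pq y h2).symm

/-! ### Images of words over `E ∪ T` -/

/-- The relation on points attached to a word: `x` and `y` lie in a common block of its image. -/
def wRel {n : ℕ} (w : List (ETO n)) (x y : Pt n) : Prop := (PhiETO w).rel x y

theorem wRel_symm {n : ℕ} {w : List (ETO n)} {x y : Pt n} (h : wRel w x y) : wRel w y x :=
  (PhiETO w).symm h

theorem wRel_trans {n : ℕ} {w : List (ETO n)} {x y z : Pt n} (h : wRel w x y)
    (h' : wRel w y z) : wRel w x z :=
  (PhiETO w).trans h h'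

theorem wRel_nil {n : ℕ} (x y : Pt n) : wRel ([] : List (ETO n)) x y ↔ idx x = idx y := Iff.rfl

theorem tg_lt {n : ℕ} {p q : Fin n} (h : p < q) : ETO.t p q h = tg p q h.ne := by
  simp [tg, h]

theorem tg_isET {n : ℕ} {p q : Fin n} (h : p ≠ q) : (tg p q h).isET := by
  unfold tg; split <;> trivial

/-- The formula for `ē_k · w̄`, stated for words: the empty tail is a separate case because a
one-letter word is not evaluated as a product. -/
theorem wRel_e_of {n : ℕ} (k : Fin n) (w : List (ETO n)) (hw : ∀ x, wRel w x x) (x y : Pt n) :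
    wRel (ETO.e k :: w) x y ↔ x = y ∨ (wRel w x y ∧ x ≠ Sum.inl k ∧ y ≠ Sum.inl k) := by
  cases w with
  | nil =>
    change (x = y ∨ (idx x = idx y ∧ idx x ≠ k)) ↔ x = y ∨ (idx x = idx y ∧ _)
    rcases x with a | a <;> rcases y with b | b <;> simp [idx] <;> grind
  | cons z w => exact ebar_mul_rel k hw x y

theorem wRel_t_of {n : ℕ} (p q : Fin n) (hpq : p < q) (w : List (ETO n))
    (hw : ∀ x, wRel w x x) (x y : Pt n) :
    wRel (ETO.t p q hpq :: w) x y ↔ wRel w x y ∨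
      ((wRel w x (Sum.inl p) ∨ wRel w x (Sum.inl q)) ∧
        (wRel w y (Sum.inl p) ∨ wRel w y (Sum.inl q))) := by
  cases w with
  | nil => exact Iff.rfl
  | cons z w => exact tbar_mul_rel p q hw x y

theorem wRel_refl {n : ℕ} (w : List (ETO n)) (hw : ∀ x ∈ w, ETO.isET x) (x : Pt n) :
    wRel w x x := by
  induction w generalizing x with
  | nil => exact rfl
  | cons z w ih =>
    have ih := ih (fun x hx => hw x (List.mem_cons_of_mem _ hx))
    cases z with
    | e k => rw [wRel_e_of _ _ ih]; exact Or.inl rfl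
    | t p q h => rw [wRel_t_of _ _ _ _ ih]; exact Or.inl (ih x)
    | o k => exact (hw _ List.mem_cons_self).elim

theorem wRel_e {n : ℕ} (k : Fin n) (w : List (ETO n)) (hw : ∀ x ∈ w, ETO.isET x) (x y : Pt n) :
    wRel (ETO.e k :: w) x y ↔ x = y ∨ (wRel w x y ∧ x ≠ Sum.inl k ∧ y ≠ Sum.inl k) :=
  wRel_e_of k w (wRel_refl w hw) x y

theorem wRel_t {n : ℕ} (p q : Fin n) (hpq : p ≠ q) (w : List (ETO n))
    (hw : ∀ x ∈ w, ETO.isET x) (x y : Pt n) :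
    wRel (tg p q hpq :: w) x y ↔ wRel w x y ∨
      ((wRel w x (Sum.inl p) ∨ wRel w x (Sum.inl q)) ∧
        (wRel w y (Sum.inl p) ∨ wRel w y (Sum.inl q))) := by
  unfold tg
  split
  · exact wRel_t_of p q _ w (wRel_refl w hw) x y
  · rw [wRel_t_of q p _ w (wRel_refl w hw) x y]; tauto

/-- The word `∏_{a ∈ l} e_a`. -/
def eL {n : ℕ} (l : List (Fin n)) : List (ETO n) := l.map ETO.e

/-- The word `∏_{a ∈ l} t_{ia}` (factors with `a = i` are omitted), which joins all the
points of `l` to `i`. -/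
def tS {n : ℕ} (i : Fin n) (l : List (Fin n)) : List (ETO n) := l.flatMap (tgd i)

theorem tgd_isET {n : ℕ} (i a : Fin n) : ∀ x ∈ tgd i a, ETO.isET x := by
  intro x hx
  unfold tgd at hx
  split at hx
  · simp at hx
  · rw [List.mem_singleton] at hx; rw [hx]; exact tg_isET _

theorem eL_isET {n : ℕ} (l : List (Fin n)) : ∀ x ∈ eL l, ETO.isET x := by
  intro x hx
  obtain ⟨a, -, rfl⟩ := List.mem_map.1 hx
  trivial

theorem tS_isET {n : ℕ} (i : Fin n) (l : List (Fin n)) : ∀ x ∈ tS i l, ETO.isET x := by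
  intro x hx
  obtain ⟨a, -, h⟩ := List.mem_flatMap.1 hx
  exact tgd_isET _ _ _ h

theorem isET_append {n : ℕ} {u v : List (ETO n)} (hu : ∀ x ∈ u, ETO.isET x)
    (hv : ∀ x ∈ v, ETO.isET x) : ∀ x ∈ u ++ v, ETO.isET x := by
  intro x hx
  exact (List.mem_append.1 hx).elim (hu x) (hv x)

theorem wRel_eL {n : ℕ} (l : List (Fin n)) (w : List (ETO n)) (hw : ∀ x ∈ w, ETO.isET x)
    (x y : Pt n) : wRel (eL l ++ w) x y ↔
      x = y ∨ (wRel w x y ∧ (∀ a ∈ l, x ≠ Sum.inl a) ∧ (∀ a ∈ l, y ≠ Sum.inl a)) := by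
  induction l with
  | nil =>
    simp only [eL, List.map_nil, List.nil_append, List.not_mem_nil, false_imp_iff,
      implies_true, and_true]
    refine ⟨Or.inr, ?_⟩
    rintro (rfl | h)
    exacts [wRel_refl w hw _, h]
  | cons a l ih =>
    change wRel (ETO.e a :: (eL l ++ w)) x y ↔ _
    rw [wRel_e _ _ (isET_append (eL_isET l) hw), ih]
    simp only [List.forall_mem_cons]
    tauto

theorem wRel_tgd {n : ℕ} (p q : Fin n) (w : List (ETO n))
    (hw : ∀ x ∈ w, ETO.isET x) (x y : Pt n) :
    wRel (tgd p q ++ w) x y ↔ wRel w x y ∨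
      ((wRel w x (Sum.inl p) ∨ wRel w x (Sum.inl q)) ∧
        (wRel w y (Sum.inl p) ∨ wRel w y (Sum.inl q))) := by
  unfold tgd
  split
  · next h =>
    subst h
    simp only [List.nil_append, or_self]
    exact ⟨Or.inl, fun h => h.elim id (fun h => wRel_trans h.1 (wRel_symm h.2))⟩
  · exact wRel_t p q _ w hw x y

theorem wRel_tS {n : ℕ} (i : Fin n) (l : List (Fin n)) (w : List (ETO n))
    (hw : ∀ x ∈ w, ETO.isET x) (x y : Pt n) : wRel (tS i l ++ w) x y ↔
      wRel w x y ∨ ((∃ a ∈ i :: l, wRel w x (Sum.inl a)) ∧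
        (∃ a ∈ i :: l, wRel w y (Sum.inl a))) := by
  induction l generalizing x y with
  | nil =>
    simp only [tS, List.flatMap_nil, List.nil_append, List.mem_singleton, exists_eq_left]
    exact ⟨Or.inl, fun h => h.elim id (fun h => wRel_trans h.1 (wRel_symm h.2))⟩
  | cons a l ih =>
    have : tS i (a :: l) ++ w = tgd i a ++ (tS i l ++ w) := by simp [tS]
    rw [this, wRel_tgd _ _ _ (isET_append (tS_isET i l) hw)]
    have hii := wRel_refl w hw (Sum.inl i)
    have haa := wRel_refl w hw (Sum.inl a)
    -- `S z` says that `z` is `w`-related to a point of `i :: l`.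
    have hS : ∀ z, (∃ c ∈ i :: a :: l, wRel w z (Sum.inl c)) ↔
        (∃ c ∈ i :: l, wRel w z (Sum.inl c)) ∨ wRel w z (Sum.inl a) := by
      intro z; simp only [List.mem_cons, exists_eq_or_imp]; grind
    have hi : ∃ c ∈ i :: l, wRel w (Sum.inl i) (Sum.inl c) := ⟨i, by simp, hii⟩
    have hSi : ∀ z, wRel w z (Sum.inl i) → ∃ c ∈ i :: l, wRel w z (Sum.inl c) :=
      fun z h => ⟨i, by simp, h⟩
    simp only [ih, hS]
    have h1 := hSi x
    have h2 := hSi y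
    have h3 : wRel w x (Sum.inl a) → wRel w y (Sum.inl a) → wRel w x y :=
      fun h h' => wRel_trans h (wRel_symm h')
    clear ih hS hSi this
    revert h1 h2 h3 hi
    generalize (∃ c ∈ i :: l, wRel w x (Sum.inl c)) = Sx
    generalize (∃ c ∈ i :: l, wRel w y (Sum.inl c)) = Sy
    generalize (∃ c ∈ i :: l, wRel w (Sum.inl a) (Sum.inl c)) = Sa
    generalize (∃ c ∈ i :: l, wRel w (Sum.inl i) (Sum.inl c)) = Si
    grind

/-! ### The quotient monoid -/

/-- The congruence `~`, on the free monoid. -/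
def cong (n : ℕ) : Con (FreeMonoid (ETO n)) where
  r u v := CongGen (RelETO n) (FreeMonoid.toList u) (FreeMonoid.toList v)
  iseqv := ⟨fun _ => .refl _, fun h => .symm h, fun h h' => .trans h h'⟩
  mul' h h' := CongGen.mul h h'

/-- The monoid of words modulo `~`. -/
abbrev QM (n : ℕ) := (cong n).Quotient

/-- The class of a word modulo `~`. -/
def cl {n : ℕ} (w : List (ETO n)) : QM n := ((FreeMonoid.ofList w : FreeMonoid (ETO n)) : QM n)

theorem cl_eq {n : ℕ} {u v : List (ETO n)} : cl u = cl v ↔ CongGen (RelETO n) u v :=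
  (cong n).eq

theorem cl_append {n : ℕ} (u v : List (ETO n)) : cl (u ++ v) = cl u * cl v := rfl

theorem cl_cons {n : ℕ} (x : ETO n) (v : List (ETO n)) : cl (x :: v) = cl [x] * cl v := rfl

theorem cl_nil {n : ℕ} : cl ([] : List (ETO n)) = 1 := rfl

/-- The class of `e_k`. -/
def qe {n : ℕ} (k : Fin n) : QM n := cl [ETO.e k]

/-- The class of `o_k`. -/
def qo {n : ℕ} (k : Fin n) : QM n := cl [ETO.o k]

/-- The class of `t_pq`. -/
def qt {n : ℕ} (p q : Fin n) (h : p ≠ q) : QM n := cl [tg p q h]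

section
variable {n : ℕ}

theorem qe_idem (k : Fin n) : qe k * qe k = qe k := cl_eq.2 (.rel (.r1 k))

theorem qo_idem (k : Fin n) : qo k * qo k = qo k := cl_eq.2 (.rel (.r11 k))

theorem qe_comm (k l : Fin n) : qe k * qe l = qe l * qe k := by
  by_cases h : k = l
  · rw [h]
  · exact cl_eq.2 (.rel (.r2 k l h))

theorem qo_comm (k l : Fin n) : qo k * qo l = qo l * qo k := by
  by_cases h : k = l
  · rw [h]
  · exact cl_eq.2 (.rel (.r12 k l h))

theorem qo_qe {k l : Fin n} (h : k ≠ l) : Commute (qo k) (qe l) := cl_eq.2 (.rel (.r13 k l h))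

theorem oeo (k : Fin n) : qo k * qe k * qo k = qo k := cl_eq.2 (.rel (.r14 k))

theorem eoe (k : Fin n) : qe k * qo k * qe k = qe k := cl_eq.2 (.rel (.r15 k))

theorem qt_qo (p q k : Fin n) (h : p ≠ q) : Commute (qt p q h) (qo k) :=
  cl_eq.2 (.rel (.r16 p q k h))

theorem qt_qe (p q k : Fin n) (h : p ≠ q) (hp : k ≠ p) (hq : k ≠ q) :
    Commute (qt p q h) (qe k) :=
  cl_eq.2 (.rel (.r6 p q k h hp hq))

theorem qt_left (p q : Fin n) (h : p ≠ q) : qt p q h * qo p = qo p * qo q :=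
  cl_eq.2 (.rel (.r17a p q h))

theorem qt_right (p q : Fin n) (h : p ≠ q) : qt p q h * qo q = qo p * qo q :=
  cl_eq.2 (.rel (.r17b p q h))

theorem ete (p q : Fin n) (h : p ≠ q) : qe p * qt p q h * qe p = qe p :=
  cl_eq.2 (.rel (.r8 p q p h (Or.inl rfl)))

/-! ### Products of commuting idempotents -/

/-- The product of the values of `f` along a list. -/
def pr (f : Fin n → QM n) (l : List (Fin n)) : QM n := (l.map f).prod

theorem pr_nil (f : Fin n → QM n) : pr f [] = 1 := rfl

theorem pr_cons (f : Fin n → QM n) (a : Fin n) (l : List (Fin n)) :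
    pr f (a :: l) = f a * pr f l := by simp [pr]

theorem commute_pr {f : Fin n → QM n} {l : List (Fin n)} {c : QM n}
    (h : ∀ a ∈ l, Commute c (f a)) : Commute c (pr f l) :=
  Commute.list_prod_right _ _ (by simpa using h)

theorem mem_mul_pr {f : Fin n → QM n} (hf : ∀ a, f a * f a = f a)
    (hc : ∀ a b, f a * f b = f b * f a) {a : Fin n} {l : List (Fin n)} (h : a ∈ l) :
    f a * pr f l = pr f l := by
  induction l with
  | nil => simp at h
  | cons b l ih =>
    rw [pr_cons]
    rcases List.mem_cons.1 h with rfl | h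
    · rw [← mul_assoc, hf]
    · rw [← mul_assoc, hc, mul_assoc, ih h]

theorem subset_mul_pr {f : Fin n → QM n} (hf : ∀ a, f a * f a = f a)
    (hc : ∀ a b, f a * f b = f b * f a) {l l' : List (Fin n)} (h : ∀ a ∈ l, a ∈ l') :
    pr f l * pr f l' = pr f l' := by
  induction l with
  | nil => rw [pr_nil, one_mul]
  | cons b l ih =>
    rw [pr_cons, mul_assoc, ih (fun a ha => h a (List.mem_cons_of_mem _ ha))]
    exact mem_mul_pr hf hc (h b List.mem_cons_self)

theorem pr_comm {f : Fin n → QM n} (hc : ∀ a b, f a * f b = f b * f a) (l l' : List (Fin n)) :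
    Commute (pr f l) (pr f l') :=
  commute_pr fun b _ => (commute_pr fun a _ => (hc b a : Commute (f b) (f a))).symm

/-- A product of commuting idempotents depends only on the set of its factors. -/
theorem pr_congr {f : Fin n → QM n} (hf : ∀ a, f a * f a = f a)
    (hc : ∀ a b, f a * f b = f b * f a) {l l' : List (Fin n)} (h : ∀ a, a ∈ l ↔ a ∈ l') :
    pr f l = pr f l' := by
  rw [← subset_mul_pr hf hc (fun a ha => (h a).2 ha), (pr_comm hc _ _).eq]
  exact subset_mul_pr hf hc (fun a ha => (h a).1 ha)

/-- The class `o_A` of `∏_{a ∈ A} o_a`. -/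
abbrev po (l : List (Fin n)) : QM n := pr qo l

/-- The class `e_A` of `∏_{a ∈ A} e_a`. -/
abbrev pe (l : List (Fin n)) : QM n := pr qe l

theorem cl_eL (l : List (Fin n)) : cl (eL l) = pe l := by
  induction l with
  | nil => rfl
  | cons a l ih =>
    rw [pe, pr_cons, ← pe, ← ih]; rfl

theorem po_idem (l : List (Fin n)) : po l * po l = po l :=
  subset_mul_pr qo_idem qo_comm fun _ => id

theorem pe_idem (l : List (Fin n)) : pe l * pe l = pe l :=
  subset_mul_pr qe_idem qe_comm fun _ => id

theorem po_mul_mem {l : List (Fin n)} {a : Fin n} (h : a ∈ l) : po l * qo a = po l := by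
  rw [← (commute_pr (fun b _ => qo_comm a b) : Commute (qo a) (po l)).eq,
    mem_mul_pr qo_idem qo_comm h]

theorem pe_mul_mem {l : List (Fin n)} {a : Fin n} (h : a ∈ l) : pe l * qe a = pe l := by
  rw [← (commute_pr (fun b _ => qe_comm a b) : Commute (qe a) (pe l)).eq,
    mem_mul_pr qe_idem qe_comm h]

theorem po_pe_po (l : List (Fin n)) : po l * pe l * po l = po l := by
  induction l with
  | nil => simp [pr_nil]
  | cons a l ih =>
    by_cases h : a ∈ l
    · have h1 : ∀ b, b ∈ a :: l ↔ b ∈ l := by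
        intro b; simp only [List.mem_cons, or_iff_right_iff_imp]; rintro rfl; exact h
      rw [po, pe, pr_congr qo_idem qo_comm h1, pr_congr qe_idem qe_comm h1]
      exact ih
    · have ne : ∀ b ∈ l, b ≠ a := by rintro b hb rfl; exact h hb
      have c1 : Commute (po l) (qe a) := (commute_pr fun b hb => (qo_qe (ne b hb)).symm).symm
      have c2 : Commute (pe l) (qo a) := (commute_pr fun b hb => qo_qe (ne b hb).symm).symm
      have c3 : Commute (po l) (qo a) := (commute_pr fun b _ => qo_comm a b).symm
      rw [po, pe, pr_cons, pr_cons]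
      calc qo a * po l * (qe a * pe l) * (qo a * po l)
          = qo a * (po l * qe a) * (pe l * qo a) * po l := by simp only [mul_assoc]
        _ = qo a * qe a * (po l * qo a) * pe l * po l := by
            rw [c1.eq, c2.eq]; simp only [mul_assoc]
        _ = (qo a * qe a * qo a) * (po l * pe l * po l) := by
            rw [c3.eq]; simp only [mul_assoc]
        _ = qo a * po l := by rw [oeo, ih]

/-- The product `o_A` absorbs the letters `t_pq` with `p, q ∈ A`. -/
theorem po_qt {l : List (Fin n)} {p q : Fin n} (h : p ≠ q) (hp : p ∈ l) (hq : q ∈ l) :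
    po l * qt p q h = po l := by
  rw [← po_mul_mem hp, mul_assoc, ← (qt_qo p q p h).eq, qt_left, ← mul_assoc, po_mul_mem hp,
    po_mul_mem hq]

theorem po_tS {l : List (Fin n)} {i : Fin n} (hi : i ∈ l) (m : List (Fin n))
    (hm : ∀ a ∈ m, a ∈ l) : po l * cl (tS i m) = po l := by
  induction m with
  | nil => exact mul_one _
  | cons a m ih =>
    have : tS i (a :: m) = tgd i a ++ tS i m := by simp [tS]
    rw [this, cl_append, ← mul_assoc]
    have h1 : po l * cl (tgd i a) = po l := by
      unfold tgd
      split
      · exact mul_one _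
      · exact po_qt _ hi (hm a List.mem_cons_self)
    rw [h1, ih fun a ha => hm a (List.mem_cons_of_mem _ ha)]

theorem tS_po {l : List (Fin n)} {i : Fin n} (m : List (Fin n)) :
    Commute (cl (tS i m)) (po l) := by
  induction m with
  | nil => exact Commute.one_left _
  | cons a m ih =>
    have : tS i (a :: m) = tgd i a ++ tS i m := by simp [tS]
    rw [this, cl_append]
    refine Commute.mul_left ?_ ih
    unfold tgd
    split
    · exact Commute.one_left _
    · exact commute_pr fun b _ => qt_qo _ _ _ _

/-! ### Moving `o` along a block -/

/-- The word `w` with a letter `o` inserted at a point of its boundary: `o_a w` for the upper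
point `a`, and `w o_b` for the lower point `b'`. -/
def ins : Pt n → QM n → QM n
  | Sum.inl a, X => qo a * X
  | Sum.inr b, X => X * qo b

/-- An insertion at a boundary point moves past a first letter `c`, provided that `o_a` commutes
with `c` when the point is the upper point `a`. -/
theorem ins_mul {c X : QM n} {x : Pt n} (h : ∀ a, x = Sum.inl a → Commute (qo a) c) :
    ins x (c * X) = c * ins x X := by
  rcases x with a | b
  · simp only [ins]
    rw [← mul_assoc, (h a rfl).eq, mul_assoc]
  · simp only [ins]
    rw [mul_assoc]

/-- The letter `o` may be inserted at any point of a given block, with equivalent results. By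
induction on the word it is enough that an inserted `o` can be moved along each edge of the
diagram of a single letter. -/
theorem ins_eq_of_wRel (w : List (ETO n)) (hw : ∀ x ∈ w, ETO.isET x) (x y : Pt n)
    (h : wRel w x y) : ins x (cl w) = ins y (cl w) := by
  induction w generalizing x y with
  | nil =>
    rw [wRel_nil] at h
    rcases x with a | a <;> rcases y with b | b <;> simp only [idx, Sum.elim_inl, Sum.elim_inr,
      id] at h <;> subst h <;> simp [ins, cl_nil]
  | cons z w ih =>
    have hw' : ∀ x ∈ w, ETO.isET x := fun x hx => hw x (List.mem_cons_of_mem _ hx)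
    have ih := ih hw'
    cases z with
    | e k =>
      rw [wRel_e _ _ hw'] at h
      rcases h with rfl | ⟨h, hx, hy⟩
      · rfl
      · have key : ∀ z : Pt n, z ≠ Sum.inl k → ins z (qe k * cl w) = qe k * ins z (cl w) := by
          intro z hz
          refine ins_mul ?_
          rintro a rfl
          exact qo_qe fun h => hz (by rw [h])
        rw [cl_cons]
        change ins x (qe k * cl w) = ins y (qe k * cl w)
        rw [key x hx, key y hy, ih x y h]
    | o k => exact (hw _ List.mem_cons_self).elim
    | t p q hpq =>
      rw [tg_lt] at h ⊢
      rw [wRel_t _ _ _ _ hw'] at h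
      rw [cl_cons]
      change ins x (qt p q _ * cl w) = ins y (qt p q _ * cl w)
      have key : ∀ z : Pt n, ins z (qt p q hpq.ne * cl w) = qt p q hpq.ne * ins z (cl w) :=
        fun z => ins_mul fun a _ => (qt_qo _ _ _ _).symm
      -- inserting `o` at `p` or at `q` makes no difference, by (R17)
      have pq : qt p q hpq.ne * ins (Sum.inl q) (cl w) = qt p q hpq.ne * ins (Sum.inl p) (cl w) := by
        simp only [ins]
        rw [← mul_assoc, ← mul_assoc, qt_left, qt_right]
      have key2 : ∀ z : Pt n, (wRel w z (Sum.inl p) ∨ wRel w z (Sum.inl q)) →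
          qt p q hpq.ne * ins z (cl w) = qt p q hpq.ne * ins (Sum.inl p) (cl w) := by
        rintro z (h | h)
        · rw [ih _ _ h]
        · rw [ih _ _ h, pq]
      rw [key, key]
      rcases h with h | ⟨h1, h2⟩
      · rw [ih _ _ h]
      · rw [key2 x h1, key2 y h2]

/-- If each `o_a` with `a ∈ l` acts on the left of `X` as `o_i` does, so does their product. -/
theorem po_eq_of {l : List (Fin n)} {i : Fin n} {X : QM n} (hi : i ∈ l)
    (h : ∀ a ∈ l, qo a * X = qo i * X) : po l * X = qo i * X := by
  have key : ∀ m : List (Fin n), (∀ a ∈ m, a ∈ l) → po m * (qo i * X) = qo i * X := by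
    intro m hm
    induction m with
    | nil => exact one_mul _
    | cons a m ih =>
      rw [po, pr_cons, mul_assoc, ih fun a ha => hm a (List.mem_cons_of_mem _ ha),
        ← h a (hm a List.mem_cons_self), ← mul_assoc, qo_idem]
  rw [← key l fun _ => id, ← mul_assoc, po_mul_mem hi]

/-- The right-hand version of `po_eq_of`. -/
theorem eq_po_of {l : List (Fin n)} {j : Fin n} {X : QM n} (hj : j ∈ l)
    (h : ∀ a ∈ l, X * qo a = X * qo j) : X * po l = X * qo j := by
  have key : ∀ m : List (Fin n), (∀ a ∈ m, a ∈ l) → X * qo j * po m = X * qo j := by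
    intro m hm
    induction m with
    | nil => exact mul_one _
    | cons a m ih =>
      rw [po, pr_cons, ← mul_assoc, ← h a (hm a List.mem_cons_self), mul_assoc X, qo_idem,
        h a (hm a List.mem_cons_self), ih fun a ha => hm a (List.mem_cons_of_mem _ ha)]
  rw [← key l fun _ => id, mul_assoc, mem_mul_pr qo_idem qo_comm hj]

/-! ### Cutting out a union of blocks -/

/-- The set of points `A ∪ B'`. -/
def inZ (A B : List (Fin n)) : Pt n → Prop := Sum.elim (· ∈ A) (· ∈ B)

/-- The set `B'`. -/
def inB (B : List (Fin n)) (x : Pt n) : Prop := ∃ b ∈ B, x = Sum.inr b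

theorem mul_mul_of {M : Type*} [Monoid M] {a b c : M} (h : a * b = c) (x : M) :
    a * (b * x) = c * x := by rw [← mul_assoc, h]

theorem mul_mul_mul_of {M : Type*} [Monoid M] {a b c d : M} (h : a * (b * c) = d) (x : M) :
    a * (b * (c * x)) = d * x := by rw [← h]; simp only [mul_assoc]

/-- The rearrangement of letters needed when a letter `e_k` is passed. Here `D` is the set of
points other than `k` in the part being cut out, and `A`, `C` are its traces above and below
`e_k`. -/
theorem cut_e {k : Fin n} {D A C : List (Fin n)} (hk : k ∉ D)
    (hA : ∀ a, a ≠ k → (a ∈ A ↔ a ∈ D)) (hC : ∀ a, a ≠ k → (a ∈ C ↔ a ∈ D)) :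
    po A * qe k * po C * pe C = po A * pe A * qe k * pe C := by
  have ne : ∀ b ∈ D, b ≠ k := by rintro b hb rfl; exact hk hb
  have c1 : Commute (po D) (qe k) := (commute_pr fun b hb => (qo_qe (ne b hb)).symm).symm
  have c3 : Commute (po D) (qo k) := (commute_pr fun b _ => qo_comm k b).symm
  have c4 : Commute (pe D) (qe k) := (commute_pr fun b _ => qe_comm k b).symm
  have split : ∀ L : List (Fin n), (∀ a, a ≠ k → (a ∈ L ↔ a ∈ D)) →
      (po L = po D ∧ pe L = pe D) ∨ (po L = qo k * po D ∧ pe L = qe k * pe D) := by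
    intro L hL
    by_cases hkL : k ∈ L
    · right
      have : ∀ a, a ∈ L ↔ a ∈ k :: D := by
        intro a
        by_cases h : a = k
        · subst h; simp [hkL]
        · simp [h, hL a h]
      rw [po, pe, pr_congr qo_idem qo_comm this, pr_congr qe_idem qe_comm this, pr_cons, pr_cons]
      exact ⟨rfl, rfl⟩
    · left
      have : ∀ a, a ∈ L ↔ a ∈ D := by
        intro a
        by_cases h : a = k
        · subst h; simp [hkL, hk]
        · exact hL a h
      exact ⟨pr_congr qo_idem qo_comm this, pr_congr qe_idem qe_comm this⟩
  have dd := po_idem D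
  have ee := pe_idem D
  have kk := qe_idem k
  have eoe' := eoe k
  have oeo' := oeo k
  -- normal form: the factors with index `k` first, then `o_D` and `e_D`
  rcases split A hA with ⟨h1, h2⟩ | ⟨h1, h2⟩ <;> rcases split C hC with ⟨h3, h4⟩ | ⟨h3, h4⟩ <;>
    rw [h1, h2, h3, h4] <;> clear h1 h2 h3 h4 split <;>
    generalize po D = d at * <;> generalize pe D = f at * <;>
    simp only [mul_assoc] at eoe' oeo' <;>
    simp only [mul_assoc, c1.eq, c1.left_comm, c3.left_comm, c4.eq, c4.left_comm, dd, ee,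
      mul_mul_of kk, mul_mul_mul_of eoe', mul_mul_mul_of oeo']

theorem inZ_iff (A B : List (Fin n)) (x : Pt n) :
    inZ A B x ↔ inB B x ∨ ¬ ∀ a ∈ A, x ≠ Sum.inl a := by
  rcases x with a | a <;> simp [inZ, inB]

theorem inB_ne {A B : List (Fin n)} {x : Pt n} (h : inB B x) : ∀ a ∈ A, x ≠ Sum.inl a := by
  obtain ⟨b, -, rfl⟩ := h
  simp

/-- If `A ∪ B'` is a union of blocks of `w̄` and `j ∈ B`, then `o_A w o_B ~ o_A U o_B`, where
`U` arises from `w` by splitting the blocks inside `A ∪ B'` and regrouping the points into the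
singletons of `A` and the single block `B'`. The condition `e_A U ~ U` carries the
induction. -/
theorem exists_cut (j : Fin n) (B : List (Fin n)) (hj : j ∈ B) (w : List (ETO n))
    (hw : ∀ x ∈ w, ETO.isET x) (A : List (Fin n))
    (hsat : ∀ x y, wRel w x y → inZ A B x → inZ A B y) :
    ∃ U : List (ETO n), (∀ x ∈ U, ETO.isET x) ∧ po A * cl w * po B = po A * cl U * po B ∧
      pe A * cl U = cl U ∧
      ∀ x y, wRel U x y ↔ x = y ∨ (inB B x ∧ inB B y) ∨
        (wRel w x y ∧ ¬ inZ A B x ∧ ¬ inZ A B y) := by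
  induction w generalizing A with
  | nil =>
    have hAB : ∀ a, a ∈ A ↔ a ∈ B := fun a =>
      ⟨hsat (Sum.inl a) (Sum.inr a) rfl, hsat (Sum.inr a) (Sum.inl a) rfl⟩
    refine ⟨eL A ++ (tS j B ++ []), isET_append (eL_isET A) (isET_append (tS_isET j B) (by simp)),
      ?_, ?_, ?_⟩
    · rw [List.append_nil, cl_append, cl_eL, cl_nil, mul_one, ← mul_assoc, mul_assoc _ _ (po B),
        (tS_po B).eq, po_tS hj B (fun _ => id), po, po, ← pr_congr qo_idem qo_comm hAB]
      exact (po_idem A).trans (po_pe_po A).symm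
    · rw [cl_append, cl_eL, ← mul_assoc, pe_idem]
    · intro x y
      rw [wRel_eL _ _ (isET_append (tS_isET j B) (by simp)), wRel_tS _ _ _ (by simp)]
      simp only [wRel_nil]
      rcases x with a | a <;> rcases y with b | b <;>
        simp [idx, inB, inZ] <;> grind
  | cons z w ih =>
    have hw' : ∀ x ∈ w, ETO.isET x := fun x hx => hw x (List.mem_cons_of_mem _ hx)
    have ih := ih hw'
    cases z with
    | o k => exact (hw _ List.mem_cons_self).elim
    | t p q hlt =>
      rw [tg_lt] at *
      have hpq := hlt.ne
      simp only [wRel_t _ _ _ _ hw'] at hsat ⊢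
      have hpp := wRel_refl w hw' (Sum.inl p)
      have hqq := wRel_refl w hw' (Sum.inl q)
      have hsat' : ∀ x y, wRel w x y → inZ A B x → inZ A B y :=
        fun x y h => hsat x y (Or.inl h)
      have hiff : p ∈ A ↔ q ∈ A :=
        ⟨hsat (Sum.inl p) (Sum.inl q) (Or.inr ⟨Or.inl hpp, Or.inr hqq⟩),
          hsat (Sum.inl q) (Sum.inl p) (Or.inr ⟨Or.inr hqq, Or.inl hpp⟩)⟩
      obtain ⟨U, hU, h1, h2, h3⟩ := ih A hsat'
      have hU' : ∀ x ∈ tg p q hpq :: U, ETO.isET x := by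
        intro x hx
        rcases List.mem_cons.1 hx with rfl | hx
        exacts [tg_isET _, hU x hx]
      refine ⟨eL A ++ tg p q hpq :: U, isET_append (eL_isET A) hU', ?_, ?_, ?_⟩
      · rw [cl_append, cl_eL, cl_cons, cl_cons _ U]
        change po A * (qt p q hpq * cl w) * po B = po A * (pe A * (qt p q hpq * cl U)) * po B
        by_cases hp : p ∈ A
        · have hq := hiff.1 hp
          -- a letter `t_pq` inside the part being cut out disappears on both sides
          have ete' : pe A * qt p q hpq * pe A = pe A := by
            calc pe A * qt p q hpq * pe A
                = pe A * qe p * qt p q hpq * (qe p * pe A) := by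
                  rw [pe_mul_mem hp, mem_mul_pr qe_idem qe_comm hp]
              _ = pe A * (qe p * qt p q hpq * qe p) * pe A := by simp only [mul_assoc]
              _ = pe A := by rw [ete, pe_mul_mem hp, pe_idem]
          rw [← mul_assoc (po A), po_qt hpq hp hq, h1, ← h2]
          congr 2
          rw [← mul_assoc (qt p q hpq), ← mul_assoc (pe A), ← mul_assoc (pe A), ete']
        · have hq : q ∉ A := fun h => hp (hiff.2 h)
          have c1 : Commute (qt p q hpq) (po A) := commute_pr fun b _ => qt_qo _ _ _ _
          have c2 : Commute (qt p q hpq) (pe A) := commute_pr fun b hb =>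
            qt_qe _ _ _ _ (by rintro rfl; exact hp hb) (by rintro rfl; exact hq hb)
          calc po A * (qt p q hpq * cl w) * po B = qt p q hpq * (po A * cl w * po B) := by
                rw [← mul_assoc (po A), ← c1.eq]; simp only [mul_assoc]
            _ = (qt p q hpq * po A) * cl U * po B := by rw [h1]; simp only [mul_assoc]
            _ = po A * (qt p q hpq * (pe A * cl U)) * po B := by
                rw [c1.eq, h2]; simp only [mul_assoc]
            _ = po A * (pe A * (qt p q hpq * cl U)) * po B := by
                rw [← mul_assoc (qt p q hpq), c2.eq]; simp only [mul_assoc]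
      · rw [cl_append, cl_eL, ← mul_assoc, pe_idem]
      · intro x y
        rw [wRel_eL _ _ hU', wRel_t _ _ _ _ hU]
        simp only [h3]
        have nB : ∀ c, ¬ inB B (Sum.inl c) := by rintro c ⟨b, -, h⟩; cases h
        have hZ : ∀ c, inZ A B (Sum.inl c) ↔ c ∈ A := fun c => Iff.rfl
        -- after multiplication by `e_A`, joining `p` and `q` has the same effect as in `w`
        -- on the points outside `A ∪ B'`
        have key : ∀ z, (((z = Sum.inl p ∨ inB B z ∧ inB B (Sum.inl p) ∨
            wRel w z (Sum.inl p) ∧ ¬ inZ A B z ∧ ¬ inZ A B (Sum.inl p)) ∨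
            (z = Sum.inl q ∨ inB B z ∧ inB B (Sum.inl q) ∨
            wRel w z (Sum.inl q) ∧ ¬ inZ A B z ∧ ¬ inZ A B (Sum.inl q))) ∧
            ∀ a ∈ A, z ≠ Sum.inl a) ↔
            ((wRel w z (Sum.inl p) ∨ wRel w z (Sum.inl q)) ∧ ¬ inZ A B z) := by
          intro z
          simp only [nB, hZ, and_false, false_or]
          have e1 := hsat' z (Sum.inl p)
          have e2 := hsat' z (Sum.inl q)
          have n0 : ¬ inZ A B z → ∀ a ∈ A, z ≠ Sum.inl a := by
            rintro h a ha rfl; exact h ha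
          rw [hZ] at e1 e2
          grind
        have kx := key x
        have ky := key y
        have zx := inZ_iff A B x
        have zy := inZ_iff A B y
        have bx := inB_ne (A := A) (B := B) (x := x)
        have hby := inB_ne (A := A) (B := B) (x := y)
        clear key hsat hsat' h3 h1 h2 ih
        grind
    | e k =>
      simp only [wRel_e _ _ hw'] at hsat ⊢
      obtain ⟨D, hD⟩ : ∃ D : List (Fin n), ∀ a, a ∈ D ↔ a ∈ A ∧ a ≠ k :=
        ⟨A.filter (· ≠ k), by simp⟩
      have hkD : k ∉ D := fun h => ((hD k).1 h).2 rfl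
      have hDZ : ∀ z, inZ D B z ↔ inZ A B z ∧ z ≠ Sum.inl k := by
        rintro (a | a) <;> simp [inZ, hD]
      -- `C` is the set of points below `e_k` which belong to the part being cut out
      obtain ⟨C, hC, hkC⟩ : ∃ C : List (Fin n), (∀ a, a ≠ k → (a ∈ C ↔ a ∈ D)) ∧
          (k ∈ C ↔ ∃ y, inZ D B y ∧ wRel w (Sum.inl k) y) := by
        by_cases h : ∃ y, inZ D B y ∧ wRel w (Sum.inl k) y
        · exact ⟨k :: D, fun a ha => by simp [ha], by simp [h]⟩
        · exact ⟨D, fun a ha => Iff.rfl, by simp [h, hkD]⟩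
      have hCZ : ∀ z, z ≠ Sum.inl k → (inZ C B z ↔ inZ A B z) := by
        rintro (a | a) h
        · have h : a ≠ k := fun h' => h (by rw [h'])
          simp [inZ, hC a h, hD, h]
        · rfl
      have hsat' : ∀ x y, wRel w x y → inZ C B x → inZ C B y := by
        intro x y hxy hx
        by_cases hyk : y = Sum.inl k
        · subst hyk
          by_cases hxk : x = Sum.inl k
          · subst hxk; exact hx
          · exact hkC.2 ⟨x, (hDZ x).2 ⟨(hCZ x hxk).1 hx, hxk⟩, wRel_symm hxy⟩
        · rw [hCZ y hyk]
          by_cases hxk : x = Sum.inl k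
          · subst hxk
            obtain ⟨z, hz, hkz⟩ := hkC.1 hx
            rw [hDZ] at hz
            exact hsat z y (Or.inr ⟨wRel_trans (wRel_symm hkz) hxy, hz.2, hyk⟩) hz.1
          · exact hsat x y (Or.inr ⟨hxy, hxk, hyk⟩) ((hCZ x hxk).1 hx)
      obtain ⟨U, hU, h1, h2, h3⟩ := ih C hsat'
      have hU' : ∀ x ∈ ETO.e k :: U, ETO.isET x := by
        intro x hx
        rcases List.mem_cons.1 hx with rfl | hx
        exacts [trivial, hU x hx]
      refine ⟨eL A ++ ETO.e k :: U, isET_append (eL_isET A) hU', ?_, ?_, ?_⟩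
      · rw [cl_append, cl_eL, cl_cons, cl_cons _ U]
        change po A * (qe k * cl w) * po B = po A * (pe A * (qe k * cl U)) * po B
        have c1 : Commute (qe k) (po D) := commute_pr fun b hb =>
          (qo_qe (by rintro rfl; exact hkD hb)).symm
        have hAD : po A * po D = po A := by
          rw [(pr_comm qo_comm A D).eq]
          exact subset_mul_pr qo_idem qo_comm fun a ha => ((hD a).1 ha).1
        -- the letter `o_k` can be created below `e_k` when `k ∈ C`
        have hDC : po D * cl w * po B = po C * cl w * po B := by
          by_cases hk : k ∈ C
          · have hC' : po C = po D * qo k := by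
              rw [← (commute_pr (fun b _ => qo_comm k b) : Commute (qo k) (po D)).eq]
              rw [← pr_cons]
              refine pr_congr qo_idem qo_comm fun a => ?_
              by_cases h : a = k
              · subst h; simp [hk]
              · simp [h, hC a h]
            obtain ⟨z, hz, hkz⟩ := hkC.1 hk
            have hi := ins_eq_of_wRel w hw' _ _ hkz
            rw [hC', mul_assoc (po D) (qo k)]
            rcases z with a | b
            · simp only [ins] at hi
              rw [hi, ← mul_assoc (po D), po_mul_mem hz]
            · simp only [ins] at hi
              rw [hi, mul_assoc, mul_assoc, mul_assoc, mem_mul_pr qo_idem qo_comm hz]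
          · have : po C = po D := pr_congr qo_idem qo_comm fun a => by
              by_cases h : a = k
              · subst h; simp [hk, hkD]
              · exact hC a h
            rw [this]
        have hcut := cut_e (A := A) (C := C) hkD (fun a ha => by simp [hD, ha]) hC
        calc po A * (qe k * cl w) * po B
            = po A * (po D * qe k) * cl w * po B := by
              rw [← mul_assoc (po A) (po D), hAD]; simp only [mul_assoc]
          _ = po A * qe k * (po D * cl w * po B) := by rw [← c1.eq]; simp only [mul_assoc]
          _ = po A * qe k * po C * (pe C * cl U) * po B := by
              rw [hDC, h1, h2]; simp only [mul_assoc]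
          _ = po A * qe k * po C * pe C * cl U * po B := by simp only [mul_assoc]
          _ = po A * pe A * qe k * (pe C * cl U) * po B := by rw [hcut]; simp only [mul_assoc]
          _ = po A * (pe A * (qe k * cl U)) * po B := by rw [h2]; simp only [mul_assoc]
      · rw [cl_append, cl_eL, ← mul_assoc, pe_idem]
      · intro x y
        rw [wRel_eL _ _ hU', wRel_e _ _ hU]
        simp only [h3]
        have nB : ∀ c, ¬ inB B (Sum.inl c) := by rintro c ⟨b, -, h⟩; cases h
        have zx := inZ_iff A B x
        have zy := inZ_iff A B y
        have cx := hCZ x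
        have cy := hCZ y
        have bx := inB_ne (A := A) (B := B) (x := x)
        have hby := inB_ne (A := A) (B := B) (x := y)
        have bx' : inB B x → x ≠ Sum.inl k := by rintro h rfl; exact nB _ h
        have hby' : inB B y → y ≠ Sum.inl k := by rintro h rfl; exact nB _ h
        clear hsat hsat' h3 h1 h2 ih hC hkC hD hDZ hCZ
        grind

end

/-- if `i ∈ A`, `j ∈ B` and `A ∪ B'` is a block of `w̄` for a word
`w ∈ (E ∪ T)⁺`, then `o_i w ~ w o_j`, and `o_i w ~ o_i u o_j` for some `u ∈ (E ∪ T)⁺`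
whose image `ū` is obtained from `w̄` by replacing the block `A ∪ B'` by the two blocks
`A` and `B'`. -/
theorem stmt9 (n : ℕ) (hn : 1 ≤ n) (w : List (ETO n)) (hw : w ≠ [])
    (hET : ∀ x ∈ w, ETO.isET x) (i j : Fin n) (A B : Set (Fin n))
    (hi : i ∈ A) (hj : j ∈ B)
    (hblock : (PhiETO w).IsBlock (upSet A ∪ dnSet B)) :
    CongGen (RelETO n) (ETO.o i :: w) (w ++ [ETO.o j]) ∧
    ∃ u : List (ETO n), u ≠ [] ∧ (∀ x ∈ u, ETO.isET x) ∧
      CongGen (RelETO n) (ETO.o i :: w) (ETO.o i :: (u ++ [ETO.o j])) ∧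
      (∀ x y : Pt n, (PhiETO u).rel x y ↔
        ((PhiETO w).rel x y ∧
          ¬ ((x ∈ upSet A ∧ y ∈ dnSet B) ∨ (x ∈ dnSet B ∧ y ∈ upSet A)))) := by
  obtain ⟨lA, hA⟩ : ∃ l : List (Fin n), ∀ a, a ∈ l ↔ a ∈ A :=
    ⟨(Set.toFinite A).toFinset.toList, by simp⟩
  obtain ⟨lB, hB⟩ : ∃ l : List (Fin n), ∀ a, a ∈ l ↔ a ∈ B :=
    ⟨(Set.toFinite B).toFinset.toList, by simp⟩
  have hiA := (hA i).2 hi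
  have hjB := (hB j).2 hj
  have hup : ∀ x, x ∈ upSet A ↔ ∃ a ∈ lA, x = Sum.inl a := by
    intro x; simp only [upSet, Set.mem_image, hA, eq_comm]
  have hdn : ∀ x, x ∈ dnSet B ↔ inB lB x := by
    intro x; simp only [dnSet, Set.mem_image, inB, hB, eq_comm]
  have hZ : ∀ x, inZ lA lB x ↔ x ∈ upSet A ∪ dnSet B := by
    intro x
    rw [Set.mem_union, hup, hdn, inZ_iff]
    simp only [ne_eq, not_forall, not_not, exists_prop, or_comm]
  obtain ⟨x₀, -, hx₀⟩ := hblock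
  have hZx : ∀ x, inZ lA lB x ↔ wRel w x₀ x := by
    intro x; rw [hZ, hx₀]; rfl
  have hZZ : ∀ x y, inZ lA lB x → inZ lA lB y → wRel w x y := by
    intro x y hx hy
    exact wRel_trans (wRel_symm ((hZx x).1 hx)) ((hZx y).1 hy)
  have hsat : ∀ x y, wRel w x y → inZ lA lB x → inZ lA lB y := by
    intro x y hxy hx
    exact (hZx y).2 (wRel_trans ((hZx x).1 hx) hxy)
  have hiZ : inZ lA lB (Sum.inl i) := hiA
  have hjZ : inZ lA lB (Sum.inr j) := hjB
  have hmove : qo i * cl w = cl w * qo j := ins_eq_of_wRel w hET _ _ (hZZ _ _ hiZ hjZ)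
  refine ⟨cl_eq.1 hmove, ?_⟩
  obtain ⟨U, hU, h1, -, h3⟩ := exists_cut j lB hjB w hET lA hsat
  have huET := isET_append (tS_isET i lA) hU
  have hrel : ∀ x y : Pt n, (PhiETO (tS i lA ++ U)).rel x y ↔
        ((PhiETO w).rel x y ∧
          ¬ ((x ∈ upSet A ∧ y ∈ dnSet B) ∨ (x ∈ dnSet B ∧ y ∈ upSet A))) := by
    intro x y
    change wRel (tS i lA ++ U) x y ↔ wRel w x y ∧ _
    have hS : ∀ z, (∃ a ∈ i :: lA, wRel U z (Sum.inl a)) ↔ z ∈ upSet A := by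
      intro z
      rw [hup]
      constructor
      · rintro ⟨a, ha, h⟩
        have ha : a ∈ lA := (List.mem_cons.1 ha).elim (fun h => h ▸ hiA) id
        rw [h3] at h
        rcases h with h | ⟨-, b, -, h⟩ | ⟨-, -, h⟩
        · exact ⟨a, ha, h⟩
        · cases h
        · exact (h ha).elim
      · rintro ⟨a, ha, rfl⟩
        exact ⟨a, List.mem_cons_of_mem _ ha, wRel_refl U hU _⟩
    rw [wRel_tS _ _ _ hU, hS, hS, h3, ← hdn, ← hdn]
    have e1 := hZZ x y
    have e2 := hsat x y
    have e3 : wRel w x y → inZ lA lB y → inZ lA lB x := fun h => hsat y x (wRel_symm h)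
    have e4 : x = y → wRel w x y := by rintro rfl; exact wRel_refl w hET x
    have hdisj : ∀ z, z ∈ upSet A → z ∈ dnSet B → False := by
      rintro z ⟨a, -, rfl⟩ ⟨b, -, h⟩; cases h
    have d1 := hdisj x
    have d2 := hdisj y
    have e5 : x = y → (x ∈ upSet A ↔ y ∈ upSet A) ∧ (x ∈ dnSet B ↔ y ∈ dnSet B) := by
      rintro rfl; exact ⟨Iff.rfl, Iff.rfl⟩
    simp only [hZ, Set.mem_union] at e1 e2 e3 ⊢
    generalize (x ∈ upSet A) = xa at *
    generalize (y ∈ upSet A) = ya at *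
    generalize (x ∈ dnSet B) = xb at *
    generalize (y ∈ dnSet B) = yb at *
    clear hS hdisj h3 hZZ hZx hx₀ hsat hup hdn hZ h1
    grind
  refine ⟨tS i lA ++ U, ?_, huET, ?_, hrel⟩
  · intro h
    have h4 := hrel (Sum.inl i) (Sum.inr i)
    rw [h] at h4
    have h5 := h4.1 rfl
    have h6 := (hZ _).1 (hsat _ _ h5.1 hiZ)
    rcases h6 with ⟨a, -, h6⟩ | h6
    · cases h6
    · exact h5.2 (Or.inl ⟨⟨i, hi, rfl⟩, h6⟩)
  · refine cl_eq.1 ?_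
    change qo i * cl w = qo i * (cl (tS i lA ++ U) * qo j)
    -- all the letters `o` at the points of `A ∪ B'` may be added to `o_i w`
    have hw1 : po lA * cl w = qo i * cl w := po_eq_of hiA fun a ha =>
      ins_eq_of_wRel w hET (Sum.inl a) (Sum.inl i) (hZZ _ _ ha hiA)
    have hw2 : cl w * po lB = cl w * qo j := eq_po_of hjB fun b hb =>
      ins_eq_of_wRel w hET (Sum.inr b) (Sum.inr j) (hZZ _ _ hb hjB)
    have hu1 : po lA * cl (tS i lA ++ U) = qo i * cl (tS i lA ++ U) := by
      refine po_eq_of hiA fun a ha => ins_eq_of_wRel _ huET (Sum.inl a) (Sum.inl i) ?_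
      refine (hrel _ _).2 ⟨hZZ _ _ ha hiA, ?_⟩
      rintro (⟨-, b, -, h⟩ | ⟨⟨b, -, h⟩, -⟩) <;> cases h
    have hu2 : cl (tS i lA ++ U) * po lB = cl (tS i lA ++ U) * qo j := by
      refine eq_po_of hjB fun b hb => ins_eq_of_wRel _ huET (Sum.inr b) (Sum.inr j) ?_
      refine (hrel _ _).2 ⟨hZZ _ _ hb hjB, ?_⟩
      rintro (⟨⟨b, -, h⟩, -⟩ | ⟨-, b, -, h⟩) <;> cases h
    calc qo i * cl w = qo i * (qo i * cl w) := by rw [← mul_assoc, qo_idem]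
      _ = po lA * cl w * po lB := by rw [hmove, ← mul_assoc, hmove, mul_assoc (cl w), qo_idem,
            hw1, hmove, mul_assoc, mem_mul_pr qo_idem qo_comm hjB, hw2]
      _ = po lA * cl (tS i lA ++ U) * po lB := by
          rw [h1, cl_append, ← mul_assoc (po lA), po_tS hiA lA fun _ => id]
      _ = qo i * (cl (tS i lA ++ U) * qo j) := by rw [hu1, mul_assoc, hu2]

end RookPaper
end

section
/- Let w ∈ (E∪T∪O)^+. Then w ~ o_A u o_B for some (possibly empty) subsets A,B ⊆ [n] and some u ∈ (E∪T)^+ such that either A = ∅ or A is a block of ū, and either B = ∅ or B' is a block of ū. -/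
/-!
The `o` letters behave like dots that travel through a word. A dot at `i` passes through `e_j`
(`j ≠ i`) and `t_jk`, is stopped by `e_i`, and spreads from `i` to `j` at `t_ij`. Interleave a word
`y₁ ⋯ y_m` with dots, `o_{S₀} y₁ o_{S₁} ⋯ y_m o_{S_m}`, starting from empty `S_i`, and enlarge the
`S_i` as long as dots travel; this stops because there are at most `(m + 1) n` dots
(`exists_allSaturated`).

For a saturated word, `o_S = o_S e_S o_S` allows each letter `y` to be replaced by
`e_S o_S y o_{S'} e_{S'}`, and `e_S o_S e_S = e_S` removes all dots from it. The result is
`o_A e_A z e_B o_B` with `z` a word over `E ∪ T` (`exists_normal_form`).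

Finally `t_ij o_i = o_i o_j` lets `o_A` and `o_B` absorb words `t_A`, `t_B` that join the points of
`A` and `B`. In `u = t_A e_A z e_B t_B` the set `A` is a block, since `e_A` isolates its points and
`t_A` merges them, and dually for `B'`. The blocks are found by multiplying letters from the left,
using the effect of `ē_b` and `t̄_ab` on blocks (`isBlock_ebar_mul`, `isBlock_tbar_mul` and their
variants), so that associativity of the product of rook partitions is not required.
-/


namespace RookPaper

/-! ### Products of commuting idempotents over finite sets -/

/-- The product of `f i` over `i ∈ S`, taken in increasing order of `i`. -/
def sprod {n : ℕ} {M : Type*} [Monoid M] (f : Fin n → M) (S : Finset (Fin n)) : M :=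
  ((S.sort (· ≤ ·)).map f).prod

section sprod

variable {n : ℕ} {M : Type*} [Monoid M] {f : Fin n → M}

lemma sprod_empty : sprod f ∅ = 1 := by simp [sprod]

lemma sprod_insert (hc : ∀ i j, Commute (f i) (f j)) (hi : ∀ i, f i * f i = f i)
    (i : Fin n) (S : Finset (Fin n)) : sprod f (insert i S) = f i * sprod f S := by
  have key : ∀ (i : Fin n) (S : Finset (Fin n)), i ∉ S →
      sprod f (insert i S) = f i * sprod f S := by
    intro i S h
    have hp : (insert i S).sort (· ≤ ·) |>.Perm (i :: S.sort (· ≤ ·)) := by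
      rw [List.perm_ext_iff_of_nodup (Finset.sort_nodup _ _)
        (by simp [h])]
      simp
    have h2 := (hp.map f).prod_eq' (by
      rw [List.pairwise_map]
      exact List.pairwise_of_forall (fun a b => hc a b))
    simpa [sprod] using h2
  by_cases h : i ∈ S
  · rw [Finset.insert_eq_of_mem h]
    have h3 := key i (S.erase i) (Finset.notMem_erase i S)
    rw [Finset.insert_erase h] at h3
    rw [h3, ← mul_assoc, hi]
  · exact key i S h

lemma sprod_absorb (hc : ∀ i j, Commute (f i) (f j)) (hi : ∀ i, f i * f i = f i)
    {i : Fin n} {S : Finset (Fin n)} (h : i ∈ S) : f i * sprod f S = sprod f S := by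
  rw [← sprod_insert hc hi, Finset.insert_eq_of_mem h]

lemma sprod_union (hc : ∀ i j, Commute (f i) (f j)) (hi : ∀ i, f i * f i = f i)
    (S T : Finset (Fin n)) : sprod f (S ∪ T) = sprod f S * sprod f T := by
  induction S using Finset.induction_on with
  | empty => simp [sprod_empty]
  | insert a S _ ih =>
    rw [Finset.insert_union, sprod_insert hc hi, sprod_insert hc hi, ih, mul_assoc]

lemma sprod_idem (hc : ∀ i j, Commute (f i) (f j)) (hi : ∀ i, f i * f i = f i)
    (S : Finset (Fin n)) : sprod f S * sprod f S = sprod f S := by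
  rw [← sprod_union hc hi, Finset.union_idempotent]

lemma commute_sprod {x : M} {S : Finset (Fin n)} (h : ∀ i ∈ S, Commute x (f i)) :
    Commute x (sprod f S) := by
  refine Commute.list_prod_right _ _ ?_
  intro y hy
  obtain ⟨i, hi, rfl⟩ := List.mem_map.1 hy
  exact h i ((Finset.mem_sort _).1 hi)

end sprod

/-! ### The monoid presented by the relations -/

/-- The congruence generated by the relations, on the free monoid. -/
def etoCon (n : ℕ) : Con (FreeMonoid (ETO n)) where
  r := CongGen (RelETO n)
  iseqv := ⟨CongGen.refl, CongGen.symm, CongGen.trans⟩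
  mul' := CongGen.mul

/-- The monoid defined by the presentation. -/
abbrev PM (n : ℕ) := (etoCon n).Quotient

/-- The class of a word in the presented monoid. -/
def cls {n : ℕ} (u : List (ETO n)) : PM n := (etoCon n).toQuotient (FreeMonoid.ofList u)

section PM

variable {n : ℕ}

lemma cls_append (u v : List (ETO n)) : cls (u ++ v) = cls u * cls v := rfl

lemma cls_cons (x : ETO n) (v : List (ETO n)) : cls (x :: v) = cls [x] * cls v := rfl

lemma cls_nil : cls ([] : List (ETO n)) = 1 := rfl

lemma cls_eq {u v : List (ETO n)} : cls u = cls v ↔ CongGen (RelETO n) u v :=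
  (etoCon n).eq

lemma cls_rel {u v : List (ETO n)} (h : RelETO n u v) : cls u = cls v :=
  cls_eq.2 (CongGen.rel h)

/-- The generator `e_i` of the presented monoid. -/
def ge (i : Fin n) : PM n := cls [ETO.e i]
/-- The generator `o_i` of the presented monoid. -/
def go (i : Fin n) : PM n := cls [ETO.o i]
/-- The generator `t_ij` of the presented monoid. -/
def gt (i j : Fin n) (h : i ≠ j) : PM n := cls [tg i j h]

lemma ge_idem (i : Fin n) : ge i * ge i = ge i := cls_rel (.r1 i)
lemma go_idem (i : Fin n) : go i * go i = go i := cls_rel (.r11 i)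

lemma ge_comm (i j : Fin n) : Commute (ge i) (ge j) := by
  by_cases h : i = j
  · subst h; exact Commute.refl _
  · exact cls_rel (.r2 i j h)

lemma go_comm (i j : Fin n) : Commute (go i) (go j) := by
  by_cases h : i = j
  · subst h; exact Commute.refl _
  · exact cls_rel (.r12 i j h)

lemma go_ge_comm {i j : Fin n} (h : i ≠ j) : Commute (go i) (ge j) := cls_rel (.r13 i j h)

lemma go_ge_go (i : Fin n) : go i * ge i * go i = go i := cls_rel (.r14 i)
lemma ge_go_ge (i : Fin n) : ge i * go i * ge i = ge i := cls_rel (.r15 i)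

lemma gt_ge_comm {i j k : Fin n} (h : i ≠ j) (hi : k ≠ i) (hj : k ≠ j) :
    Commute (gt i j h) (ge k) := cls_rel (.r6 i j k h hi hj)

lemma gt_go_comm {i j : Fin n} (h : i ≠ j) (k : Fin n) : Commute (gt i j h) (go k) :=
  cls_rel (.r16 i j k h)

lemma gt_go_left {i j : Fin n} (h : i ≠ j) : gt i j h * go i = go i * go j :=
  cls_rel (.r17a i j h)

lemma gt_go_right {i j : Fin n} (h : i ≠ j) : gt i j h * go j = go i * go j :=
  cls_rel (.r17b i j h)

/-- The product `e_S` of the `e_i` with `i ∈ S`. -/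
def gE (S : Finset (Fin n)) : PM n := sprod ge S
/-- The product `o_S` of the `o_i` with `i ∈ S`. -/
def gO (S : Finset (Fin n)) : PM n := sprod go S

lemma cls_map (g : Fin n → ETO n) (l : List (Fin n)) :
    cls (l.map g) = (l.map fun i => cls [g i]).prod := by
  induction l with
  | nil => rfl
  | cons a l ih => rw [List.map_cons, cls_cons, ih, List.map_cons, List.prod_cons]

lemma cls_oWord (S : Finset (Fin n)) : cls (oWord S) = gO S := cls_map _ _

/-- The word `e_{i₁} ⋯ e_{i_k}` for `S = {i₁ < ⋯ < i_k}`. -/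
def eSetWord (S : Finset (Fin n)) : List (ETO n) := (S.sort (· ≤ ·)).map ETO.e

lemma cls_eSetWord (S : Finset (Fin n)) : cls (eSetWord S) = gE S := cls_map _ _

lemma gO_insert (i : Fin n) (S : Finset (Fin n)) : gO (insert i S) = go i * gO S :=
  sprod_insert go_comm go_idem i S
lemma gE_insert (i : Fin n) (S : Finset (Fin n)) : gE (insert i S) = ge i * gE S :=
  sprod_insert ge_comm ge_idem i S
lemma gO_union (S T : Finset (Fin n)) : gO (S ∪ T) = gO S * gO T :=
  sprod_union go_comm go_idem S T
lemma gO_idem (S : Finset (Fin n)) : gO S * gO S = gO S := sprod_idem go_comm go_idem S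
lemma gE_idem (S : Finset (Fin n)) : gE S * gE S = gE S := sprod_idem ge_comm ge_idem S
lemma go_gO_comm (i : Fin n) (S : Finset (Fin n)) : Commute (go i) (gO S) :=
  commute_sprod fun _ _ => go_comm _ _
lemma ge_gE_comm (i : Fin n) (S : Finset (Fin n)) : Commute (ge i) (gE S) :=
  commute_sprod fun _ _ => ge_comm _ _
lemma gO_absorb {i : Fin n} {S : Finset (Fin n)} (h : i ∈ S) : go i * gO S = gO S :=
  sprod_absorb go_comm go_idem h
lemma ge_gO_comm {i : Fin n} {S : Finset (Fin n)} (h : i ∉ S) : Commute (ge i) (gO S) :=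
  commute_sprod fun j hj => (go_ge_comm (fun e : j = i => h (e ▸ hj))).symm
lemma go_gE_comm {i : Fin n} {S : Finset (Fin n)} (h : i ∉ S) : Commute (go i) (gE S) :=
  commute_sprod fun _ hj => go_ge_comm (fun e => h (e ▸ hj))
lemma gt_gO_comm {i j : Fin n} (h : i ≠ j) (S : Finset (Fin n)) : Commute (gt i j h) (gO S) :=
  commute_sprod fun _ _ => gt_go_comm h _
lemma gt_gE_comm {i j : Fin n} (h : i ≠ j) {S : Finset (Fin n)} (hi : i ∉ S) (hj : j ∉ S) :
    Commute (gt i j h) (gE S) :=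
  commute_sprod fun _ hk => gt_ge_comm h (fun e => hi (e ▸ hk)) (fun e => hj (e ▸ hk))

lemma gO_gE_gO (S : Finset (Fin n)) : gO S * gE S * gO S = gO S := by
  induction S using Finset.induction_on with
  | empty => simp [gO, gE, sprod_empty]
  | insert i S hi ih =>
    calc gO (insert i S) * gE (insert i S) * gO (insert i S)
        = go i * (gO S * ge i) * gE S * (go i * gO S) := by
          rw [gO_insert, gE_insert]; simp only [mul_assoc]
      _ = go i * ge i * gO S * (gE S * go i) * gO S := by
          rw [← (ge_gO_comm hi).eq]; simp only [mul_assoc]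
      _ = go i * ge i * (gO S * go i) * gE S * gO S := by
          rw [← (go_gE_comm hi).eq]; simp only [mul_assoc]
      _ = (go i * ge i * go i) * (gO S * gE S * gO S) := by
          rw [← (go_gO_comm i S).eq]; simp only [mul_assoc]
      _ = gO (insert i S) := by rw [go_ge_go, ih, gO_insert]

lemma gE_gO_gE (S : Finset (Fin n)) : gE S * gO S * gE S = gE S := by
  induction S using Finset.induction_on with
  | empty => simp [gO, gE, sprod_empty]
  | insert i S hi ih =>
    calc gE (insert i S) * gO (insert i S) * gE (insert i S)
        = ge i * (gE S * go i) * gO S * (ge i * gE S) := by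
          rw [gO_insert, gE_insert]; simp only [mul_assoc]
      _ = ge i * go i * gE S * (gO S * ge i) * gE S := by
          rw [← (go_gE_comm hi).eq]; simp only [mul_assoc]
      _ = ge i * go i * (gE S * ge i) * gO S * gE S := by
          rw [← (ge_gO_comm hi).eq]; simp only [mul_assoc]
      _ = (ge i * go i * ge i) * (gE S * gO S * gE S) := by
          rw [← (ge_gE_comm i S).eq]; simp only [mul_assoc]
      _ = gE (insert i S) := by rw [ge_go_ge, ih, gE_insert]

lemma gt_gO_absorb {i j : Fin n} (h : i ≠ j) {S : Finset (Fin n)} (hi : i ∈ S) (hj : j ∈ S) :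
    gt i j h * gO S = gO S := by
  rw [← gO_absorb hi, ← mul_assoc, gt_go_left, mul_assoc, gO_absorb hj]

/-- Once one of `i`, `j` is dotted, `t_ij` spreads the dot to the other one. -/
lemma gt_gO_spread {i j : Fin n} (h : i ≠ j) {S : Finset (Fin n)} (hS : i ∈ S ∨ j ∈ S) :
    gt i j h * gO S = gO (insert i (insert j S)) := by
  rw [gO_insert, gO_insert, ← mul_assoc]
  rcases hS with hS | hS
  · conv_lhs => rw [← gO_absorb hS, ← mul_assoc, gt_go_left]
  · conv_lhs => rw [← gO_absorb hS, ← mul_assoc, gt_go_right]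

/-- `m` is represented by a non-empty word over `E ∪ T`. -/
def IsETWord (m : PM n) : Prop := ∃ z : List (ETO n), z ≠ [] ∧ (∀ x ∈ z, x.isET) ∧ cls z = m

lemma isET_eSetWord (S : Finset (Fin n)) : ∀ x ∈ eSetWord S, x.isET := by
  intro x hx
  obtain ⟨i, _, rfl⟩ := List.mem_map.1 hx
  trivial

lemma isETWord_gE {S : Finset (Fin n)} (h : S.Nonempty) : IsETWord (gE S) := by
  refine ⟨eSetWord S, ?_, isET_eSetWord S, cls_eSetWord S⟩
  obtain ⟨i, hi⟩ := h
  exact List.ne_nil_of_mem (List.mem_map_of_mem ((Finset.mem_sort _).2 hi))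

lemma isETWord_gE_mul (S : Finset (Fin n)) {x : ETO n} (hx : x.isET) :
    IsETWord (gE S * cls [x]) := by
  refine ⟨eSetWord S ++ [x], by simp, ?_, by rw [cls_append, cls_eSetWord]⟩
  intro y hy
  rcases List.mem_append.1 hy with hy | hy
  · exact isET_eSetWord S y hy
  · rw [List.mem_singleton.1 hy]; exact hx

/-! ### Saturating a word with dots -/

/-- `(U, y, V)` is saturated when `o_U y o_V`, flanked by `e_U` and `e_V`, is a non-empty word
over `E ∪ T`: no dots travel through the letter `y` any more. -/
def Saturated (U : Finset (Fin n)) (y : ETO n) (V : Finset (Fin n)) : Prop :=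
  IsETWord (gE U * gO U * cls [y] * gO V * gE V)

/-- `e_U o_U e_l` does not depend on whether `l ∈ U`, by `e_l o_l e_l = e_l`. -/
lemma gE_gO_ge_aux {l : Fin n} {U R : Finset (Fin n)} (hl : l ∉ R)
    (hU : U = R ∨ U = insert l R) : gE U * gO U * ge l = gE R * gO R * ge l := by
  rcases hU with rfl | rfl
  · rfl
  · rw [gE_insert, gO_insert]
    calc ge l * gE R * (go l * gO R) * ge l
        = ge l * (gE R * go l) * (gO R * ge l) := by simp only [mul_assoc]
      _ = ge l * go l * (gE R * ge l) * gO R := by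
          rw [← (go_gE_comm hl).eq, ← (ge_gO_comm hl).eq]; simp only [mul_assoc]
      _ = (ge l * go l * ge l) * gE R * gO R := by
          rw [← (ge_gE_comm l R).eq]; simp only [mul_assoc]
      _ = gE R * (ge l * gO R) := by rw [ge_go_ge, (ge_gE_comm l R).eq, mul_assoc]
      _ = gE R * gO R * ge l := by rw [(ge_gO_comm hl).eq, mul_assoc]

lemma ge_gO_gE_aux {l : Fin n} {U R : Finset (Fin n)} (hl : l ∉ R)
    (hU : U = R ∨ U = insert l R) : ge l * gO U * gE U = ge l * gO R * gE R := by
  rcases hU with rfl | rfl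
  · rfl
  · rw [gE_insert, gO_insert]
    calc ge l * (go l * gO R) * (ge l * gE R)
        = ge l * go l * (gO R * ge l) * gE R := by simp only [mul_assoc]
      _ = (ge l * go l * ge l) * gO R * gE R := by
          rw [← (ge_gO_comm hl).eq]; simp only [mul_assoc]
      _ = ge l * gO R * gE R := by rw [ge_go_ge]

/-- Dots on either side of a letter can be increased, without changing the element of the
presented monoid, until they are saturated at that letter. -/
lemma exists_saturated (S : Finset (Fin n)) (y : ETO n) (T : Finset (Fin n)) :
    ∃ U V, S ⊆ U ∧ T ⊆ V ∧ gO S * cls [y] * gO T = gO U * cls [y] * gO V ∧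
      Saturated U y V := by
  cases y with
  | o l =>
    refine ⟨insert l (S ∪ T), insert l (S ∪ T), fun x hx => by simp [hx],
      fun x hx => by simp [hx], ?_, ?_⟩
    · change gO S * go l * gO T = gO _ * go l * gO _
      rw [mul_assoc (gO (insert l _)), gO_absorb (Finset.mem_insert_self _ _), gO_idem,
        gO_insert, gO_union, ← (go_gO_comm l S).eq, mul_assoc]
    · have : gE (insert l (S ∪ T)) * gO (insert l (S ∪ T)) * cls [ETO.o l] *
          gO (insert l (S ∪ T)) * gE (insert l (S ∪ T)) = gE (insert l (S ∪ T)) := by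
        change _ * _ * go l * _ * _ = _
        rw [mul_assoc _ (go l), gO_absorb (Finset.mem_insert_self _ _), mul_assoc (gE _), gO_idem,
          gE_gO_gE]
      unfold Saturated
      rw [this]
      exact isETWord_gE (Finset.insert_nonempty _ _)
  | e l =>
    set R := (S ∪ T).erase l with hR
    have hl : l ∉ R := Finset.notMem_erase _ _
    have hU : ∀ A B : Finset (Fin n), A ∪ B = S ∪ T →
        A ∪ B.erase l = R ∨ A ∪ B.erase l = insert l R := by
      intro A B h
      by_cases hA : l ∈ A
      · right
        ext x
        have hx := Finset.ext_iff.1 h x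
        by_cases hxl : x = l
        · subst hxl; simp [hA]
        · simp only [hR, Finset.mem_union, Finset.mem_erase, Finset.mem_insert] at hx ⊢
          tauto
      · left
        ext x
        have hx := Finset.ext_iff.1 h x
        by_cases hxl : x = l
        · subst hxl; simp [hA, hR]
        · simp only [hR, Finset.mem_union, Finset.mem_erase] at hx ⊢
          tauto
    refine ⟨S ∪ T.erase l, T ∪ S.erase l, Finset.subset_union_left, Finset.subset_union_left,
      ?_, ?_⟩
    · change gO S * ge l * gO T = gO _ * ge l * gO _
      have h1 : gO S = gO S * gO (S.erase l) := by
        rw [← gO_union, Finset.union_eq_left.2 (Finset.erase_subset _ _)]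
      have h2 : gO T = gO (T.erase l) * gO T := by
        rw [← gO_union, Finset.union_eq_right.2 (Finset.erase_subset _ _)]
      have h3 : gO (T ∪ S.erase l) = gO (S.erase l) * gO T := by
        rw [Finset.union_comm, gO_union]
      calc gO S * ge l * gO T = gO S * (gO (S.erase l) * ge l) * (gO (T.erase l) * gO T) := by
            rw [← h2, ← mul_assoc (gO S), ← h1]
        _ = gO S * ge l * (gO (S.erase l) * gO (T.erase l)) * gO T := by
            rw [← (ge_gO_comm (Finset.notMem_erase l S)).eq]; simp only [mul_assoc]
        _ = gO S * (ge l * gO (T.erase l)) * gO (S.erase l) * gO T := by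
            rw [← gO_union, Finset.union_comm, gO_union]; simp only [mul_assoc]
        _ = gO (S ∪ T.erase l) * ge l * gO (T ∪ S.erase l) := by
            rw [(ge_gO_comm (Finset.notMem_erase l T)).eq, h3, gO_union]; simp only [mul_assoc]
    · have h1 := gE_gO_ge_aux hl (hU S T rfl)
      have h2 := ge_gO_gE_aux hl (hU T S (Finset.union_comm _ _))
      have : gE (S ∪ T.erase l) * gO (S ∪ T.erase l) * cls [ETO.e l] *
          gO (T ∪ S.erase l) * gE (T ∪ S.erase l) = gE R * cls [ETO.e l] := by
        change _ * _ * ge l * gO _ * gE _ = _ * ge l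
        generalize gE (S ∪ T.erase l) = a at *
        generalize gO (S ∪ T.erase l) = b at *
        generalize gE (T ∪ S.erase l) = c at *
        generalize gO (T ∪ S.erase l) = d at *
        calc a * b * ge l * d * c = (a * b * ge l) * (ge l * d * c) := by
              simp only [← mul_assoc]
              rw [mul_assoc (a * b) (ge l) (ge l), ge_idem]
          _ = gE R * gO R * (ge l * ge l) * gO R * gE R := by
              rw [h1, h2]; simp only [mul_assoc]
          _ = gE R * (gO R * ge l) * gO R * gE R := by
              rw [ge_idem]; simp only [mul_assoc]
          _ = gE R * ge l * (gO R * gO R) * gE R := by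
              rw [← (ge_gO_comm hl).eq]; simp only [mul_assoc]
          _ = gE R * (ge l * gO R) * gE R := by rw [gO_idem]; simp only [mul_assoc]
          _ = gE R * gO R * (ge l * gE R) := by
              rw [(ge_gO_comm hl).eq]; simp only [mul_assoc]
          _ = gE R * gO R * gE R * ge l := by
              rw [(ge_gE_comm l R).eq]; simp only [mul_assoc]
          _ = gE R * ge l := by rw [gE_gO_gE]
      unfold Saturated
      rw [this]
      exact isETWord_gE_mul R trivial
  | t i j hij =>
    have ht : cls [ETO.t i j hij] = gt i j hij.ne := by simp [gt, tg, hij]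
    unfold Saturated
    by_cases hK : i ∈ S ∪ T ∨ j ∈ S ∪ T
    · set K := insert i (insert j (S ∪ T)) with hKdef
      have hiK : i ∈ K := by simp [hKdef]
      have hjK : j ∈ K := by simp [hKdef]
      refine ⟨K, K, fun x hx => by simp [hKdef, hx], fun x hx => by simp [hKdef, hx], ?_, ?_⟩
      · rw [ht, mul_assoc (gO K), gt_gO_absorb hij.ne hiK hjK, gO_idem,
          ← (gt_gO_comm hij.ne S).eq, mul_assoc, ← gO_union, gt_gO_spread hij.ne hK]
      · rw [ht, mul_assoc _ (gt i j _), gt_gO_absorb hij.ne hiK hjK, mul_assoc (gE K), gO_idem,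
          gE_gO_gE]
        exact isETWord_gE ⟨i, hiK⟩
    · rw [not_or] at hK
      refine ⟨S ∪ T, S ∪ T, Finset.subset_union_left, Finset.subset_union_right, ?_, ?_⟩
      · rw [ht, ← (gt_gO_comm hij.ne S).eq, ← (gt_gO_comm hij.ne _).eq, mul_assoc,
          mul_assoc _ (gO _), gO_idem, gO_union]
      · generalize S ∪ T = K at hK
        have : gE K * gO K * cls [ETO.t i j hij] * gO K * gE K =
            gE K * cls [ETO.t i j hij] := by
          rw [ht]
          calc gE K * gO K * gt i j hij.ne * gO K * gE K
              = gE K * gO K * (gt i j hij.ne * gO K) * gE K := by simp only [mul_assoc]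
            _ = gE K * (gO K * gO K) * (gt i j hij.ne * gE K) := by
              rw [(gt_gO_comm hij.ne _).eq]; simp only [mul_assoc]
            _ = gE K * gO K * gE K * gt i j hij.ne := by
              rw [gO_idem, (gt_gE_comm hij.ne hK.1 hK.2).eq]; simp only [mul_assoc]
            _ = gE K * gt i j hij.ne := by rw [gE_gO_gE]
        rw [this]
        exact isETWord_gE_mul K trivial

/-- The element `o_S y₁ o_{S₁} y₂ o_{S₂} ⋯ y_m o_{S_m}`, where
`L = [(y₁, S₁), …, (y_m, S_m)]`. -/
def dotted : Finset (Fin n) → List (ETO n × Finset (Fin n)) → PM n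
  | S, [] => gO S
  | S, (y, T) :: L => gO S * cls [y] * dotted T L

/-- Every letter of the dotted word is saturated. -/
def AllSaturated : Finset (Fin n) → List (ETO n × Finset (Fin n)) → Prop
  | _, [] => True
  | S, (y, T) :: L => Saturated S y T ∧ AllSaturated T L

/-- The total number of dots in a dotted word. -/
def dotCount : Finset (Fin n) → List (ETO n × Finset (Fin n)) → ℕ
  | S, [] => S.card
  | S, (_, T) :: L => S.card + dotCount T L

lemma dotCount_le (S : Finset (Fin n)) (L : List (ETO n × Finset (Fin n))) :
    dotCount S L ≤ (L.length + 1) * n := by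
  induction L generalizing S with
  | nil => simpa [dotCount] using S.card_le_univ
  | cons p L ih =>
    obtain ⟨y, T⟩ := p
    have h1 := ih T
    have h2 : S.card ≤ n := by simpa using S.card_le_univ
    simp only [dotCount, List.length_cons]
    rw [add_mul _ 1, one_mul]
    omega

lemma gO_mul_dotted (S : Finset (Fin n)) (L : List (ETO n × Finset (Fin n))) :
    gO S * dotted S L = dotted S L := by
  cases L with
  | nil => exact gO_idem S
  | cons p L => obtain ⟨y, T⟩ := p; simp only [dotted, ← mul_assoc, gO_idem]

/-- Adding dots at the left end of a dotted word. -/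
lemma gO_mul_dotted_of_subset {T V : Finset (Fin n)} (hTV : T ⊆ V)
    (L : List (ETO n × Finset (Fin n))) :
    gO V * dotted T L = dotted V L := by
  have h : gO V * gO T = gO V := by rw [← gO_union, Finset.union_eq_left.2 hTV]
  cases L with
  | nil => exact h
  | cons p L => obtain ⟨y, W⟩ := p; simp only [dotted, ← mul_assoc, h]

lemma dotCount_mono {T V : Finset (Fin n)} (hTV : T ⊆ V) (L : List (ETO n × Finset (Fin n))) :
    dotCount T L ≤ dotCount V L ∧ (T ≠ V → dotCount T L < dotCount V L) := by
  have h1 := Finset.card_le_card hTV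
  have h2 : T ≠ V → T.card < V.card := fun h => Finset.card_lt_card (hTV.ssubset_of_ne h)
  cases L with
  | nil => exact ⟨h1, h2⟩
  | cons p L =>
    obtain ⟨y, W⟩ := p
    simp only [dotCount]
    exact ⟨by omega, fun h => by have := h2 h; omega⟩

/-- A dotted word is saturated, or equal in the presented monoid to one with the same number of letters
and more dots. -/
lemma saturated_or_grow (S : Finset (Fin n)) (L : List (ETO n × Finset (Fin n))) :
    AllSaturated S L ∨ ∃ S' L', L'.length = L.length ∧ dotted S' L' = dotted S L ∧
      dotCount S L < dotCount S' L' := by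
  induction L generalizing S with
  | nil => exact Or.inl trivial
  | cons p L ih =>
    obtain ⟨y, T⟩ := p
    obtain ⟨U, V, hSU, hTV, heq, hsat⟩ := exists_saturated S y T
    by_cases hch : S = U ∧ T = V
    · obtain ⟨rfl, rfl⟩ := hch
      rcases ih T with h | ⟨T', L', h1, h2, h3⟩
      · exact Or.inl ⟨hsat, h⟩
      · refine Or.inr ⟨S, (y, T') :: L', by simp [h1], by simp only [dotted, h2], ?_⟩
        simp only [dotCount]; omega
    · refine Or.inr ⟨U, (y, V) :: L, rfl, ?_, ?_⟩
      · simp only [dotted]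
        rw [← gO_mul_dotted_of_subset hTV, ← mul_assoc, ← heq, mul_assoc, gO_mul_dotted]
      · have h1 := dotCount_mono hTV L
        have h2 := Finset.card_le_card hSU
        simp only [dotCount]
        by_cases hT : T = V
        · have hS : S ≠ U := fun h => hch ⟨h, hT⟩
          have := Finset.card_lt_card (hSU.ssubset_of_ne hS)
          omega
        · have := h1.2 hT
          omega

/-- Dots can be added until every letter is saturated: the number of dots is bounded. -/
lemma exists_allSaturated (S : Finset (Fin n)) (L : List (ETO n × Finset (Fin n))) :
    ∃ S' L', L'.length = L.length ∧ dotted S' L' = dotted S L ∧ AllSaturated S' L' := by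
  induction hk : (L.length + 1) * n - dotCount S L using Nat.strong_induction_on
    generalizing S L with
  | _ k ih =>
    rcases saturated_or_grow S L with h | ⟨S', L', h1, h2, h3⟩
    · exact ⟨S, L, rfl, rfl, h⟩
    · have hb := dotCount_le S' L'
      rw [h1] at hb
      obtain ⟨S'', L'', g1, g2, g3⟩ := ih _ (by subst hk; rw [h1]; omega) S' L' rfl
      exact ⟨S'', L'', g1.trans h1, g2.trans h2, g3⟩

/-- In a saturated dotted word all dots except those at the two ends can be removed. -/
lemma dotted_eq_of_allSaturated (S : Finset (Fin n)) (L : List (ETO n × Finset (Fin n)))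
    (h : AllSaturated S L) :
    ∃ (z : List (ETO n)) (B : Finset (Fin n)), (∀ x ∈ z, x.isET) ∧ (L ≠ [] → z ≠ []) ∧
      gE S * dotted S L = cls z * gE B * gO B := by
  induction L generalizing S with
  | nil => exact ⟨[], S, by simp, by simp, by rw [cls_nil, one_mul]; rfl⟩
  | cons p L ih =>
    obtain ⟨y, T⟩ := p
    obtain ⟨⟨z₁, hz₁, hz₁', hc₁⟩, h2⟩ := h
    obtain ⟨z, B, hz, -, hc⟩ := ih T h2
    refine ⟨z₁ ++ z, B, ?_, fun _ => by simp [hz₁], ?_⟩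
    · intro x hx
      rcases List.mem_append.1 hx with hx | hx
      exacts [hz₁' x hx, hz x hx]
    · have hT : dotted T L = gO T * gE T * dotted T L := by
        conv_lhs => rw [← gO_mul_dotted, ← gO_gE_gO, mul_assoc, gO_mul_dotted]
      calc gE S * (gO S * cls [y] * dotted T L)
          = gE S * gO S * cls [y] * gO T * (gE T * gE T) * dotted T L := by
            rw [gE_idem, hT]
            conv_rhs => rw [← hT]
            simp only [mul_assoc]
        _ = cls z₁ * (gE T * dotted T L) := by rw [hc₁]; simp only [mul_assoc]
        _ = cls (z₁ ++ z) * gE B * gO B := by rw [hc, cls_append]; simp only [mul_assoc]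

/-- Every word equals `o_A e_A z e_B o_B` with `z` a non-empty word over `E ∪ T`. -/
lemma exists_normal_form (w : List (ETO n)) (hw : w ≠ []) :
    ∃ (A B : Finset (Fin n)) (z : List (ETO n)), z ≠ [] ∧ (∀ x ∈ z, x.isET) ∧
      cls w = gO A * gE A * cls z * gE B * gO B := by
  have h0 : ∀ w : List (ETO n), dotted ∅ (w.map fun y => (y, ∅)) = cls w := by
    intro w
    induction w with
    | nil => simp [dotted, gO, sprod_empty, cls_nil]
    | cons y w ih =>
      rw [cls_cons, ← ih]
      simp [dotted, gO, sprod_empty]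
  obtain ⟨A, L, hlen, hd, hs⟩ := exists_allSaturated ∅ (w.map fun y => (y, ∅))
  obtain ⟨z, B, hz, hne, hc⟩ := dotted_eq_of_allSaturated A L hs
  refine ⟨A, B, z, hne ?_, hz, ?_⟩
  · rintro rfl
    simp only [List.length_nil, List.length_map] at hlen
    exact hw (List.length_eq_zero_iff.1 hlen.symm)
  · rw [← h0, ← hd]
    conv_lhs => rw [← gO_mul_dotted, ← gO_gE_gO, mul_assoc, gO_mul_dotted]
    calc gO A * gE A * dotted A L = gO A * (gE A * dotted A L) := mul_assoc _ _ _
      _ = gO A * (gE A * (gE A * dotted A L)) := by rw [← mul_assoc (gE A), gE_idem]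
      _ = _ := by rw [hc]; simp only [mul_assoc]

end PM

/-! ### Blocks of products -/

section blocks

variable {n : ℕ}

lemma RP.ext_rel {α β : RP n} (h : ∀ x y, α.rel x y ↔ β.rel x y) : α = β := by
  cases α; cases β
  congr
  funext x y
  exact propext (h x y)

/-- A criterion for blocks of a product, when `α` has no rook dots: the outer part of a set `Z` of
vertices of the product graph is a block if `Z` is closed under adjacency and has no white vertex,
and its outer vertices are all connected to one vertex `c`.
Here `Z` consists of the upper vertices in `P` and of the points of `X`, seen in the two lower
rows. -/
lemma isBlock_mul {α β : RP n} (P : Fin n → Prop) (X : Pt n → Prop) (c : V3 n)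
    (hβ : ∀ a b, β.rel a b → X a → X b) (hβd : ∀ a, X a → β.rel a a)
    (hα : ∀ a b, α.rel a b → Sum.elim P (fun i => X (Sum.inl i)) a →
      Sum.elim P (fun i => X (Sum.inl i)) b)
    (hαd : ∀ a, α.rel a a)
    (hne : ∃ y : Pt n, Sum.elim P (fun i => X (Sum.inr i)) y)
    (hconn : ∀ y : Pt n, Sum.elim P (fun i => X (Sum.inr i)) y → pgConn α β c (embOut y)) :
    (α * β).IsBlock {y | Sum.elim P (fun i => X (Sum.inr i)) y} := by
  obtain ⟨x, hx⟩ := hne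
  have hedge : ∀ u v : V3 n, pgEdge α β u v → Sum.elim P X u → (Sum.elim P X v : Prop) := by
    have key : ∀ a : Pt n, (Sum.elim P X (embA a) : Prop) =
        Sum.elim P (fun i => X (Sum.inl i)) a := by
      rintro (i | i) <;> rfl
    have key' : ∀ a : Pt n, (Sum.elim P X (embB a) : Prop) = X a := by
      rintro (i | i) <;> rfl
    rintro u v (⟨a, b, hab, rfl, rfl⟩ | ⟨a, b, hab, rfl, rfl⟩)
    · rw [key, key]; exact hα a b hab
    · rw [key', key']; exact hβ a b hab
  have hsymm : ∀ u v : V3 n, pgEdge α β u v → pgEdge α β v u := by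
    rintro u v (⟨a, b, hab, rfl, rfl⟩ | ⟨a, b, hab, rfl, rfl⟩)
    · exact Or.inl ⟨b, a, α.symm hab, rfl, rfl⟩
    · exact Or.inr ⟨b, a, β.symm hab, rfl, rfl⟩
  have hcl : ∀ u v : V3 n, pgConn α β u v → ((Sum.elim P X u : Prop) ↔ Sum.elim P X v) := by
    intro u v h
    induction h with
    | base h => exact ⟨hedge _ _ h, hedge _ _ (hsymm _ _ h)⟩
    | refl => exact Iff.rfl
    | symm _ ih => exact ih.symm
    | trans _ _ ih1 ih2 => exact ih1.trans ih2
  have hout : ∀ y : Pt n, (Sum.elim P X (embOut y) : Prop) =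
      Sum.elim P (fun i => X (Sum.inr i)) y := by
    rintro (i | i) <;> rfl
  have hwhite : ∀ w, pgWhite α β w → ¬ pgConn α β (embOut x) w := by
    intro w hw hc
    have hZ := (hcl _ _ hc).1 (by rw [hout]; exact hx)
    rcases hw with ⟨i, rfl, h⟩ | ⟨i, rfl, h | h⟩ | ⟨i, rfl, h⟩
    · exact h (hαd _)
    · exact h (hαd _)
    · exact h (hβd _ hZ)
    · exact h (hβd _ hZ)
  refine ⟨x, ⟨RClosure.refl _, hwhite⟩, ?_⟩
  ext y
  constructor
  · intro hy
    exact ⟨(RClosure.symm (hconn x hx)).trans (hconn y hy), hwhite⟩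
  · intro hy
    have := (hcl _ _ hy.1).1 (by rw [hout]; exact hx)
    rwa [hout] at this

lemma conn_left {α β : RP n} {a b : Pt n} (h : α.rel a b) :
    pgConn α β (embA a) (embA b) := RClosure.base (Or.inl ⟨a, b, h, rfl, rfl⟩)

lemma conn_right {α β : RP n} {a b : Pt n} (h : β.rel a b) :
    pgConn α β (embB a) (embB b) := RClosure.base (Or.inr ⟨a, b, h, rfl, rfl⟩)

/-- `1` is a right identity. -/
lemma RP.mul_one' (α : RP n) : α * 1 = α := by
  let c : V3 n → Pt n := Sum.elim Sum.inl (Sum.elim Sum.inr Sum.inr)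
  have cA : ∀ a : Pt n, c (embA a) = a := by rintro (i | i) <;> rfl
  have cO : ∀ a : Pt n, c (embOut a) = a := by rintro (i | i) <;> rfl
  have cB : ∀ a : Pt n, c (embB a) = Sum.inr (idx a) := by rintro (i | i) <;> rfl
  have inv : ∀ u v, pgConn α 1 u v → ∀ z, α.rel z (c u) ↔ α.rel z (c v) := by
    intro u v h
    induction h with
    | base h =>
      intro z
      rcases h with ⟨a, b, hab, rfl, rfl⟩ | ⟨a, b, hab, rfl, rfl⟩
      · rw [cA, cA]
        exact ⟨fun h => α.trans h hab, fun h => α.trans h (α.symm hab)⟩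
      · have hab' : idx a = idx b := hab
        rw [cB, cB, hab']
    | refl => exact fun z => Iff.rfl
    | symm _ ih => exact fun z => (ih z).symm
    | trans _ _ ih1 ih2 => exact fun z => (ih1 z).trans (ih2 z)
  have hAO : ∀ a : Pt n, pgConn α 1 (embOut a) (embA a) := by
    rintro (i | i)
    · exact RClosure.refl _
    · exact conn_right (a := Sum.inr i) (b := Sum.inl i) rfl
  refine RP.ext_rel fun x y => ⟨?_, fun h => ⟨?_, ?_⟩⟩
  · rintro ⟨h, hw⟩
    have hxx : α.rel x x := by
      by_contra hx
      rcases x with i | i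
      · exact hw (vTop i) (Or.inl ⟨i, rfl, hx⟩) (RClosure.refl _)
      · exact hw (vMid i) (Or.inr (Or.inl ⟨i, rfl, Or.inl hx⟩)) (hAO (Sum.inr i))
    have := (inv _ _ h x).1 (by rwa [cO])
    rwa [cO] at this
  · exact ((hAO x).trans (conn_left h)).trans (hAO y).symm
  · intro w hw hc
    have h1 : α.rel x (c w) := (inv _ _ hc x).1 (by rw [cO]; exact α.trans h (α.symm h))
    have h2 : α.rel (c w) (c w) := α.trans (α.symm h1) h1
    rcases hw with ⟨i, rfl, h⟩ | ⟨i, rfl, h | h⟩ | ⟨i, rfl, h⟩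
    · exact h h2
    · exact h h2
    · exact h rfl
    · exact h rfl

lemma PhiETO_cons (x : ETO n) (u : List (ETO n)) : PhiETO (x :: u) = phiLetter x * PhiETO u := by
  cases u with
  | nil => exact (RP.mul_one' _).symm
  | cons y u => rfl

lemma phiLetter_tg (i j : Fin n) (h : i ≠ j) : phiLetter (tg i j h) = tbar i j := by
  unfold tg
  split
  · rfl
  · refine RP.ext_rel fun x y => ?_
    simp only [phiLetter, tbar, or_comm]

/-- Multiplying by `ē_b` on the left splits the point `b` off its block. -/
lemma isBlock_ebar_singleton (b : Fin n) (β : RP n) :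
    (ebar b * β).IsBlock {Sum.inl b} := by
  have h := isBlock_mul (α := ebar b) (β := β) (fun i => i = b) (fun _ => False) (vTop b)
    (fun _ _ _ h => h) (fun _ h => h.elim)
    (by
      rintro a c (rfl | ⟨h1, h2⟩) h
      · exact h
      · rcases a with i | i
        · exact absurd h h2
        · exact h.elim)
    (fun _ => Or.inl rfl) ⟨Sum.inl b, rfl⟩
    (by
      rintro (i | i) h
      · have h' : i = b := h
        subst h'; exact RClosure.refl _
      · exact h.elim)
  convert h using 1
  ext (i | i) <;> simp

/-- Multiplying by `ē_b` on the left removes the point `b` from its block. -/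
lemma isBlock_ebar_mul {b : Fin n} {β : RP n} {X : Set (Pt n)} (hX : β.IsBlock X)
    (hne : (X \ {Sum.inl b}).Nonempty) : (ebar b * β).IsBlock (X \ {Sum.inl b}) := by
  obtain ⟨x, hx, rfl⟩ := hX
  have h := isBlock_mul (α := ebar b) (β := β) (fun i => β.rel x (Sum.inl i) ∧ i ≠ b)
    (fun y => β.rel x y) (embB x)
    (fun _ _ h h' => β.trans h' h) (fun _ h => β.trans (β.symm h) h)
    (by
      rintro a c (rfl | ⟨h1, h2⟩) h
      · exact h
      · have h3 : idx c ≠ b := h1 ▸ h2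
        rcases a with i | i <;> rcases c with j | j <;> simp only [idx, Sum.elim_inl,
          Sum.elim_inr, id] at h1 h2 h3 <;> subst h1
        · exact h
        · exact h.1
        · exact ⟨h, h3⟩
        · exact h)
    (fun _ => Or.inl rfl)
    (by
      obtain ⟨y | y, hy, hy'⟩ := hne
      · exact ⟨Sum.inl y, hy, fun h => hy' (by simp [h])⟩
      · exact ⟨Sum.inr y, hy⟩)
    (by
      rintro (i | i) h
      · exact (conn_right h.1).trans
          (conn_left (a := Sum.inr i) (b := Sum.inl i) (Or.inr ⟨rfl, h.2⟩))
      · exact conn_right h)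
  convert h using 1
  ext (i | i) <;> simp

lemma isBlock_ebar_mul_of_notMem {b : Fin n} {β : RP n} {X : Set (Pt n)} (hX : β.IsBlock X)
    (hb : Sum.inl b ∉ X) : (ebar b * β).IsBlock X := by
  have h : X \ {Sum.inl b} = X := Set.sdiff_singleton_eq_self hb
  have := isBlock_ebar_mul (b := b) hX (by
    rw [h]; obtain ⟨x, hx, rfl⟩ := hX; exact ⟨x, hx⟩)
  rwa [h] at this

/-- Multiplying by `t̄_ab` on the left merges the blocks of `a` and `b`. -/
lemma isBlock_tbar_mul {a b : Fin n} {β : RP n} {X Y : Set (Pt n)} (hX : β.IsBlock X)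
    (hY : β.IsBlock Y) (ha : Sum.inl a ∈ X) (hb : Sum.inl b ∈ Y) :
    (tbar a b * β).IsBlock (X ∪ Y) := by
  obtain ⟨x, hx, rfl⟩ := hX
  obtain ⟨y, hy, rfl⟩ := hY
  simp only [Set.mem_ofPred_eq] at ha hb
  have ha' := β.symm ha
  have hb' := β.symm hb
  -- the middle vertices `a` and `b` are joined through the block of `t̄_ab`
  have hab : pgConn (tbar a b) β (vMid a) (vMid b) :=
    conn_left (a := Sum.inr a) (b := Sum.inr b) (Or.inr ⟨Or.inl rfl, Or.inr rfl⟩)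
  have hc : ∀ z, (β.rel x z ∨ β.rel y z) → pgConn (tbar a b) β (vMid a) (embB z) := by
    rintro z (h | h)
    · exact conn_right (a := Sum.inl a) (β.trans ha' h)
    · exact hab.trans (conn_right (a := Sum.inl b) (β.trans hb' h))
  have h := isBlock_mul (α := tbar a b) (β := β)
    (fun i => β.rel x (Sum.inl i) ∨ β.rel y (Sum.inl i))
    (fun z => β.rel x z ∨ β.rel y z) (vMid a)
    (fun _ _ h h' => h'.imp (fun g => β.trans g h) (fun g => β.trans g h))
    (fun _ h => h.elim (fun h => β.trans (β.symm h) h) (fun h => β.trans (β.symm h) h))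
    (by
      have e : ∀ c : Pt n, (Sum.elim (fun i => β.rel x (Sum.inl i) ∨ β.rel y (Sum.inl i))
          (fun i => β.rel x (Sum.inl i) ∨ β.rel y (Sum.inl i)) c : Prop) =
          (β.rel x (Sum.inl (idx c)) ∨ β.rel y (Sum.inl (idx c))) := by
        rintro (i | i) <;> rfl
      intro c d h
      rw [e, e]
      rcases h with h | ⟨-, h | h⟩
      · rw [h]; exact id
      · rw [h]; exact fun _ => Or.inl ha
      · rw [h]; exact fun _ => Or.inr hb)
    (fun _ => Or.inl rfl) ⟨Sum.inl a, Or.inl ha⟩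
    (by
      rintro (i | i) h
      · exact (hc (Sum.inl i) h).trans
          (conn_left (a := Sum.inr i) (b := Sum.inl i) (Or.inl rfl))
      · exact hc _ h)
  convert h using 1
  ext (i | i) <;> simp

lemma isBlock_tbar_mul_of_notMem {a b : Fin n} {β : RP n} {X : Set (Pt n)} (hX : β.IsBlock X)
    (ha : Sum.inl a ∉ X) (hb : Sum.inl b ∉ X) : (tbar a b * β).IsBlock X := by
  obtain ⟨x, hx, rfl⟩ := hX
  simp only [Set.mem_ofPred_eq] at ha hb
  have h := isBlock_mul (α := tbar a b) (β := β) (fun i => β.rel x (Sum.inl i))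
    (fun z => β.rel x z) (embB x)
    (fun _ _ h h' => β.trans h' h) (fun _ h => β.trans (β.symm h) h)
    (by
      have e : ∀ c : Pt n, (Sum.elim (fun i => β.rel x (Sum.inl i))
          (fun i => β.rel x (Sum.inl i)) c : Prop) = β.rel x (Sum.inl (idx c)) := by
        rintro (i | i) <;> rfl
      intro c d h
      rw [e, e]
      rcases h with h | ⟨h | h, -⟩
      · rw [h]; exact id
      · rw [h]; exact fun h => absurd h ha
      · rw [h]; exact fun h => absurd h hb)
    (fun _ => Or.inl rfl)
    (by
      rcases x with i | i
      · exact ⟨Sum.inl i, hx⟩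
      · exact ⟨Sum.inr i, hx⟩)
    (by
      rintro (i | i) h
      · exact (conn_right h).trans
          (conn_left (a := Sum.inr i) (b := Sum.inl i) (Or.inl rfl))
      · exact conn_right h)
  convert h using 1
  ext (i | i) <;> simp

/-- A block consisting of lower points survives left multiplication by words over `E ∪ T`. -/
lemma isBlock_dnSet_append {u v : List (ETO n)} (hu : ∀ x ∈ u, x.isET) {B : Set (Fin n)}
    (hB : (PhiETO v).IsBlock (dnSet B)) : (PhiETO (u ++ v)).IsBlock (dnSet B) := by
  induction u with
  | nil => exact hB
  | cons x u ih =>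
    have ih' := ih fun y hy => hu y (List.mem_cons_of_mem _ hy)
    rw [List.cons_append, PhiETO_cons]
    have hn : ∀ i : Fin n, Sum.inl i ∉ dnSet B := by simp [dnSet]
    cases x with
    | e i => exact isBlock_ebar_mul_of_notMem ih' (hn i)
    | t i j h => exact isBlock_tbar_mul_of_notMem ih' (hn i) (hn j)
    | o i => exact (hu _ (List.mem_cons_self ..)).elim

/-! ### Merging and splitting the points of a set -/

/-- The word `t_{ab₁} t_{ab₂} ⋯` for `b₁, b₂, …` running through a list; entries equal to `a`
contribute nothing. -/
def starWord (a : Fin n) : List (Fin n) → List (ETO n)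
  | [] => []
  | b :: l => tgd a b ++ starWord a l

/-- The word `starWord a` merges the blocks `X a`, `X b₁`, `X b₂`, …, and keeps the other `X k`.
The hypothesis `hdis` says that `k` is the only upper point of `X k`. -/
lemma isBlock_starWord {v : List (ETO n)} {K : Set (Fin n)} {X : Fin n → Set (Pt n)}
    (hX : ∀ k ∈ K, (PhiETO v).IsBlock (X k)) (hmem : ∀ k, Sum.inl k ∈ X k)
    (hdis : ∀ i k, Sum.inl i ∈ X k → i = k) (a : Fin n) (l : List (Fin n))
    (ha : a ∈ K) (hl : ∀ b ∈ l, b ∈ K) :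
    (PhiETO (starWord a l ++ v)).IsBlock (⋃ b ∈ a :: l, X b) ∧
      ∀ k ∈ K, k ∉ a :: l → (PhiETO (starWord a l ++ v)).IsBlock (X k) := by
  induction l with
  | nil => exact ⟨by simpa [starWord] using hX a ha, fun k hk _ => hX k hk⟩
  | cons b l ih =>
    obtain ⟨ih1, ih2⟩ := ih fun c hc => hl c (List.mem_cons_of_mem _ hc)
    by_cases hab : a = b
    · subst hab
      have e : starWord a (a :: l) = starWord a l := by simp [starWord, tgd]
      rw [e]
      refine ⟨?_, fun k hk hk' => ih2 k hk fun h => hk' (List.mem_cons_of_mem _ h)⟩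
      have hU : (⋃ b ∈ a :: a :: l, X b) = ⋃ b ∈ a :: l, X b := by ext x; simp
      rw [hU]
      exact ih1
    · have e : starWord a (b :: l) ++ v = tg a b hab :: (starWord a l ++ v) := by
        simp [starWord, tgd, hab]
      rw [e, PhiETO_cons, phiLetter_tg]
      have ham : Sum.inl a ∈ ⋃ b ∈ a :: l, X b :=
        Set.mem_biUnion (List.mem_cons_self ..) (hmem a)
      constructor
      · by_cases hb : b ∈ a :: l
        · have h := isBlock_tbar_mul ih1 ih1 ham (Set.mem_biUnion hb (hmem b))
          convert h using 1
          ext x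
          simp only [Set.mem_iUnion, Set.mem_union, List.mem_cons, or_self] at hb ⊢
          constructor
          · rintro ⟨c, h | h | h, hc⟩
            · exact ⟨c, Or.inl h, hc⟩
            · subst h; exact ⟨c, hb, hc⟩
            · exact ⟨c, Or.inr h, hc⟩
          · rintro ⟨c, h | h, hc⟩
            · exact ⟨c, Or.inl h, hc⟩
            · exact ⟨c, Or.inr (Or.inr h), hc⟩
        · have h := isBlock_tbar_mul ih1 (ih2 b (hl b (List.mem_cons_self ..)) hb) ham (hmem b)
          convert h using 1
          ext x
          simp only [Set.mem_iUnion, Set.mem_union, List.mem_cons]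
          constructor
          · rintro ⟨c, h | h | h, hc⟩
            · exact Or.inl ⟨c, Or.inl h, hc⟩
            · subst h; exact Or.inr hc
            · exact Or.inl ⟨c, Or.inr h, hc⟩
          · rintro (⟨c, h | h, hc⟩ | hc)
            · exact ⟨c, Or.inl h, hc⟩
            · exact ⟨c, Or.inr (Or.inr h), hc⟩
            · exact ⟨b, Or.inr (Or.inl rfl), hc⟩
      · intro k hk hk'
        simp only [List.mem_cons, not_or] at hk'
        refine isBlock_tbar_mul_of_notMem (ih2 k hk (by simp [hk'.1, hk'.2.2])) ?_ ?_
        · exact fun h => hk'.1 (hdis _ _ h).symm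
        · exact fun h => hk'.2.1 (hdis _ _ h).symm

lemma isET_starWord (a : Fin n) (l : List (Fin n)) : ∀ x ∈ starWord a l, x.isET := by
  induction l with
  | nil => simp [starWord]
  | cons b l ih =>
    intro x hx
    rcases List.mem_append.1 hx with hx | hx
    · unfold tgd at hx
      split at hx
      · simp at hx
      · rw [List.mem_singleton.1 hx]
        unfold tg
        split <;> trivial
    · exact ih x hx

/-- Every `{a}` with `a` in the list is an upper block. -/
lemma isBlock_eLetters_singleton (v : List (ETO n)) (l : List (Fin n)) :
    ∀ k ∈ l, (PhiETO (l.map ETO.e ++ v)).IsBlock {Sum.inl k} := by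
  induction l with
  | nil => simp
  | cons b l ih =>
    intro k hk
    rw [List.map_cons, List.cons_append, PhiETO_cons]
    by_cases hkb : k = b
    · subst hkb; exact isBlock_ebar_singleton _ _
    · refine isBlock_ebar_mul_of_notMem (ih k ?_) ?_
      · exact (List.mem_cons.1 hk).resolve_left hkb
      · simpa using fun h : b = k => hkb h.symm

/-- Multiplying by the `ē_b` with `b` in the list removes these points from a block. -/
lemma isBlock_eLetters_diff {v : List (ETO n)} {X : Set (Pt n)} (hX : (PhiETO v).IsBlock X)
    (l : List (Fin n)) (hne : ∃ i, Sum.inr i ∈ X) :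
    (PhiETO (l.map ETO.e ++ v)).IsBlock (X \ {x | ∃ b ∈ l, x = Sum.inl b}) := by
  induction l with
  | nil => simpa using hX
  | cons b l ih =>
    rw [List.map_cons, List.cons_append, PhiETO_cons]
    obtain ⟨i, hi⟩ := hne
    have h := isBlock_ebar_mul (b := b) ih ⟨Sum.inr i, by simp [hi]⟩
    change (ebar b * _).IsBlock _
    convert h using 1
    ext x
    simp only [Set.mem_sdiff, Set.mem_ofPred_eq, List.mem_cons, Set.mem_singleton_iff]
    constructor
    · rintro ⟨h1, h2⟩
      exact ⟨⟨h1, fun ⟨c, hc, hx⟩ => h2 ⟨c, Or.inr hc, hx⟩⟩, fun hx => h2 ⟨b, Or.inl rfl, hx⟩⟩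
    · rintro ⟨⟨h1, h2⟩, h3⟩
      refine ⟨h1, ?_⟩
      rintro ⟨c, rfl | hc, hx⟩
      exacts [h3 hx, h2 ⟨c, hc, hx⟩]

lemma isBlock_one (k : Fin n) :
    (PhiETO ([] : List (ETO n))).IsBlock {Sum.inl k, Sum.inr k} := by
  have hrel : ∀ x y, (PhiETO ([] : List (ETO n))).rel x y ↔ idx x = idx y :=
    fun _ _ => Iff.rfl
  refine ⟨Sum.inl k, (hrel _ _).2 rfl, ?_⟩
  simp only [hrel]
  ext (i | i) <;> simp [idx, eq_comm]

end blocks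

/-! ### The two ends of the normal form -/

section ends

variable {n : ℕ}

/-- A word of `t` letters joining all elements of `A` to its least one (empty if `A` is empty). -/
def joinWord (A : Finset (Fin n)) : List (ETO n) :=
  match A.sort (· ≤ ·) with
  | [] => []
  | a :: l => starWord a l

lemma isET_joinWord (A : Finset (Fin n)) : ∀ x ∈ joinWord A, x.isET := by
  unfold joinWord
  split
  · simp
  · exact isET_starWord _ _

lemma cls_starWord_mul {A : Finset (Fin n)} {a : Fin n} (ha : a ∈ A) {l : List (Fin n)}
    (hl : ∀ b ∈ l, b ∈ A) : cls (starWord a l) * gO A = gO A ∧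
      Commute (cls (starWord a l)) (gO A) := by
  induction l with
  | nil => exact ⟨one_mul _, Commute.one_left _⟩
  | cons b l ih =>
    obtain ⟨h1, h2⟩ := ih fun c hc => hl c (List.mem_cons_of_mem _ hc)
    rw [starWord, cls_append]
    by_cases hab : a = b
    · simpa [tgd, hab, cls_nil] using ⟨by simpa [hab] using h1, by simpa [hab] using h2⟩
    · have e : cls (tgd a b) = gt a b hab := by simp [tgd, hab, gt]
      rw [e, mul_assoc, h1]
      exact ⟨gt_gO_absorb hab ha (hl b (List.mem_cons_self ..)), (gt_gO_comm hab A).mul_left h2⟩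

/-- The word `joinWord A` is absorbed by `o_A` on both sides. -/
lemma cls_joinWord_mul (A : Finset (Fin n)) : cls (joinWord A) * gO A = gO A ∧
    gO A * cls (joinWord A) = gO A := by
  have h : cls (joinWord A) * gO A = gO A ∧ Commute (cls (joinWord A)) (gO A) := by
    have hs : ∀ b ∈ A.sort (· ≤ ·), b ∈ A := fun b hb => (Finset.mem_sort _).1 hb
    unfold joinWord
    split
    · exact ⟨one_mul _, Commute.one_left _⟩
    · rename_i a l heq
      rw [heq] at hs
      exact cls_starWord_mul (hs a (List.mem_cons_self ..))
        fun b hb => hs b (List.mem_cons_of_mem _ hb)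
  exact ⟨h.1, h.2.eq.symm.trans h.1⟩

/-- The upper end of the normal form makes `A` a block: the `e` letters isolate the points of `A`,
and `joinWord A` merges them. -/
lemma isBlock_upSet (A : Finset (Fin n)) (hA : A ≠ ∅) (v : List (ETO n)) :
    (PhiETO (joinWord A ++ (eSetWord A ++ v))).IsBlock (upSet ↑A) := by
  have hs : ∀ b, b ∈ A.sort (· ≤ ·) ↔ b ∈ A := fun b => Finset.mem_sort _
  have hX := isBlock_eLetters_singleton v (A.sort (· ≤ ·))
  unfold joinWord
  split
  · rename_i heq
    rw [heq] at hs
    exact absurd (Finset.eq_empty_of_forall_notMem fun b hb => by simpa using (hs b).2 hb) hA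
  · rename_i a l heq
    rw [heq] at hs
    have h := (isBlock_starWord (K := A) (X := fun k => {Sum.inl k})
      (v := eSetWord A ++ v) (fun k hk => hX k ((Finset.mem_sort _).2 hk)) (by simp)
      (by simp) a l ((hs a).1 (List.mem_cons_self ..))
      (fun b hb => (hs b).1 (List.mem_cons_of_mem _ hb))).1
    convert h using 1
    ext x
    simp only [upSet, Set.mem_image, Finset.mem_coe, Set.mem_iUnion, Set.mem_singleton_iff, hs,
      exists_prop, eq_comm]

/-- The lower end of the normal form makes `B'` a block: `joinWord B` has `B ∪ B'` as a block, and
the `e` letters remove `B` from it. -/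
lemma isBlock_dnSet (B : Finset (Fin n)) (hB : B ≠ ∅) :
    (PhiETO (eSetWord B ++ joinWord B)).IsBlock (dnSet ↑B) := by
  have hs : ∀ b, b ∈ B.sort (· ≤ ·) ↔ b ∈ B := fun b => Finset.mem_sort _
  have hj : (PhiETO (joinWord B)).IsBlock (⋃ b ∈ B, {Sum.inl b, Sum.inr b}) := by
    unfold joinWord
    split
    · rename_i heq
      rw [heq] at hs
      exact absurd (Finset.eq_empty_of_forall_notMem fun b hb => by simpa using (hs b).2 hb) hB
    · rename_i a l heq
      rw [heq] at hs
      have h := (isBlock_starWord (K := Set.univ) (X := fun k => {Sum.inl k, Sum.inr k})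
        (v := []) (fun k _ => isBlock_one k) (by simp) (by simp) a l trivial
        (fun _ _ => trivial)).1
      rw [List.append_nil] at h
      simpa only [hs] using h
  obtain ⟨b, hb⟩ := Finset.nonempty_iff_ne_empty.2 hB
  have h := isBlock_eLetters_diff hj (B.sort (· ≤ ·)) ⟨b, by simpa using hb⟩
  unfold eSetWord
  convert h using 1
  ext (i | i) <;> simp [dnSet]

end ends

/-- every `w ∈ (E ∪ T ∪ O)⁺` satisfies `w ~ o_A u o_B` for some
(possibly empty) `A, B ⊆ [n]` and some `u ∈ (E ∪ T)⁺` such that `A = ∅` or `A` is a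
block of `ū`, and `B = ∅` or `B'` is a block of `ū`. -/
theorem stmt10 (n : ℕ) (hn : 1 ≤ n) (w : List (ETO n)) (hw : w ≠ []) :
    ∃ (A B : Finset (Fin n)) (u : List (ETO n)),
      u ≠ [] ∧ (∀ x ∈ u, ETO.isET x) ∧
      CongGen (RelETO n) w (oWord A ++ u ++ oWord B) ∧
      (A = ∅ ∨ (PhiETO u).IsBlock (upSet ↑A)) ∧
      (B = ∅ ∨ (PhiETO u).IsBlock (dnSet ↑B)) := by
  obtain ⟨A, B, z, hz, hzET, hc⟩ := exists_normal_form w hw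
  -- `o_A` absorbs the word merging the points of `A`, and likewise for `B`
  refine ⟨A, B, joinWord A ++ (eSetWord A ++ (z ++ (eSetWord B ++ joinWord B))), by simp [hz],
    ?_, ?_, ?_, ?_⟩
  · intro x hx
    simp only [List.mem_append] at hx
    rcases hx with h | h | h | h | h
    exacts [isET_joinWord A x h, isET_eSetWord A x h, hzET x h, isET_eSetWord B x h,
      isET_joinWord B x h]
  · rw [← cls_eq, hc]
    simp only [cls_append, cls_oWord, cls_eSetWord]
    conv_lhs => rw [← (cls_joinWord_mul A).2, ← (cls_joinWord_mul B).1]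
    simp only [mul_assoc]
  · by_cases hA : A = ∅
    · exact Or.inl hA
    · exact Or.inr (isBlock_upSet A hA _)
  · by_cases hB : B = ∅
    · exact Or.inl hB
    · refine Or.inr ?_
      have h := isBlock_dnSet_append (u := joinWord A ++ (eSetWord A ++ z)) (by
        intro x hx
        simp only [List.mem_append] at hx
        rcases hx with h | h | h
        exacts [isET_joinWord A x h, isET_eSetWord A x h, hzET x h]) (isBlock_dnSet B hB)
      simpa only [List.append_assoc] using h

end RookPaper
end
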